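/- arXiv:2508.17479 — 7 statements merged into one kernel-verified Lean document; each statement's English description precedes it below -/
import Mathlib

section
/- Let m ≤ n be positive integers and let W be the m × m Vandermonde matrix whose evaluation points α_1, …, α_m are distinct n-th roots of unity in ℂ. Then the spectral norm of W satisfies ‖W‖₂ ≤ √n. -/
open scoped Matrix.Norms.L2Operator

/-!
The rows of the `m × n` Vandermonde matrix on distinct `n`-th roots of unity are distinct characters
of `ℤ/nℤ`, so they are orthogonal of squared length `n`, and this matrix has norm at most `√n`.
`W` is a submatrix of it, and passing to a submatrix does not increase the spectral norm.
-/

open Matrix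
open scoped ComplexConjugate

section L2OpNorm

variable {𝕜 ι κ ι' κ' : Type*} [RCLike 𝕜] [Fintype ι] [Fintype κ] [Fintype ι'] [Fintype κ']

theorem l2_opNorm_le_sqrt_of_conjTranspose_mul_self_eq_smul_one [DecidableEq κ]
    {A : Matrix ι κ 𝕜} {c : 𝕜} (hA : Aᴴ * A = c • 1) : ‖A‖ ≤ √‖c‖ := by
  refine Real.le_sqrt_of_sq_le ?_
  calc ‖A‖ ^ 2 = ‖diagonal fun _ : κ ↦ c‖ := by
        rw [sq, ← l2_opNorm_conjTranspose_mul_self, hA, smul_one_eq_diagonal]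
    _ = ‖fun _ : κ ↦ c‖ := l2_opNorm_diagonal _
    _ ≤ ‖c‖ := pi_norm_const_le c

theorem l2_opNorm_le_sqrt_of_mul_conjTranspose_self_eq_smul_one [DecidableEq ι] [DecidableEq κ]
    {A : Matrix ι κ 𝕜} {c : 𝕜} (hA : A * Aᴴ = c • 1) : ‖A‖ ≤ √‖c‖ := by
  rw [← l2_opNorm_conjTranspose]
  apply l2_opNorm_le_sqrt_of_conjTranspose_mul_self_eq_smul_one
  rwa [conjTranspose_conjTranspose]

theorem l2_opNorm_submatrix_id_le [DecidableEq κ] [DecidableEq κ'] (A : Matrix ι κ 𝕜) {f : κ' → κ}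
    (hf : f.Injective) : ‖A.submatrix id f‖ ≤ ‖A‖ := by
  let P : Matrix κ κ' 𝕜 := (1 : Matrix κ κ 𝕜).submatrix (Equiv.refl κ) f
  have hP_isometry : Pᴴ * P = (1 : 𝕜) • 1 := by
    rw [conjTranspose_submatrix, conjTranspose_one, submatrix_mul_equiv, one_mul,
      submatrix_one f hf, one_smul]
  have hP_norm : ‖P‖ ≤ 1 := by
    simpa using l2_opNorm_le_sqrt_of_conjTranspose_mul_self_eq_smul_one hP_isometry
  calc ‖A.submatrix id f‖ = ‖A * P‖ := congrArg norm (mul_submatrix_one (.refl κ) f A).symm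
    _ ≤ ‖A‖ * ‖P‖ := l2_opNorm_mul A P
    _ ≤ ‖A‖ := mul_le_of_le_one_right (norm_nonneg A) hP_norm

theorem l2_opNorm_submatrix_le [DecidableEq κ] [DecidableEq κ'] (A : Matrix ι κ 𝕜) {e : ι' → ι}
    {f : κ' → κ} (he : e.Injective) (hf : f.Injective) : ‖A.submatrix e f‖ ≤ ‖A‖ := by
  classical
  calc ‖A.submatrix e f‖ = ‖(A.submatrix id f)ᴴ.submatrix id e‖ :=
        (l2_opNorm_conjTranspose (A.submatrix e f)).symm
    _ ≤ ‖(A.submatrix id f)ᴴ‖ := l2_opNorm_submatrix_id_le _ he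
    _ = ‖A.submatrix id f‖ := l2_opNorm_conjTranspose _
    _ ≤ ‖A‖ := l2_opNorm_submatrix_id_le A hf

end L2OpNorm

section RootsOfUnity

variable {𝕜 ι : Type*} [RCLike 𝕜] {n : ℕ}

theorem sum_mul_conj_pow_of_pow_eq_one [DecidableEq 𝕜] {z w : 𝕜} (hz : z ^ n = 1)
    (hw : w ^ n = 1) : ∑ j : Fin n, (z * conj w) ^ (j : ℕ) = if z = w then (n : 𝕜) else 0 := by
  rcases eq_or_ne n 0 with rfl | hn
  · simp
  have hw_norm : ‖w‖ = 1 :=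
    (isOfFinOrder_iff_pow_eq_one.mpr ⟨n, Nat.pos_of_ne_zero hn, hw⟩).norm_eq_one
  have hw_ne : w ≠ 0 := norm_ne_zero_iff.mp (hw_norm ▸ one_ne_zero)
  rw [← RCLike.inv_eq_conj hw_norm, ← div_eq_mul_inv,
    Fin.sum_univ_eq_sum_range (fun j ↦ (z / w) ^ j)]
  split_ifs with hzw
  · simp [hzw, div_self hw_ne]
  · have hzw_ne : z / w ≠ 1 := mt (div_eq_one_iff_eq hw_ne).mp hzw
    rw [geom_sum_eq hzw_ne, div_pow, hz, hw, div_one, sub_self, zero_div]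

/-- With the homogenizing argument `1`, the entries of `rectVandermonde α 1 n` are `α i ^ j`. -/
theorem rectVandermonde_mul_conjTranspose_of_pow_eq_one [DecidableEq ι] {α : ι → 𝕜}
    (hroot : ∀ i, α i ^ n = 1) (hinj : α.Injective) :
    rectVandermonde α 1 n * (rectVandermonde α 1 n)ᴴ = (n : 𝕜) • 1 := by
  classical
  ext i k
  calc (rectVandermonde α 1 n * (rectVandermonde α 1 n)ᴴ) i k
      = ∑ j : Fin n, (α i * conj (α k)) ^ (j : ℕ) := by
        simp [mul_apply, rectVandermonde_apply, mul_pow]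
    _ = if α i = α k then (n : 𝕜) else 0 := sum_mul_conj_pow_of_pow_eq_one (hroot i) (hroot k)
    _ = ((n : 𝕜) • (1 : Matrix ι ι 𝕜)) i k := by simp [one_apply, hinj.eq_iff]

end RootsOfUnity

theorem vandermonde_roots_of_unity_opNorm_le_general {𝕜 ι : Type*} [RCLike 𝕜] [Fintype ι]
    {k n : ℕ} (hkn : k ≤ n) {α : ι → 𝕜} (hroot : ∀ i, α i ^ n = 1) (hinj : α.Injective) :
    ‖rectVandermonde α 1 k‖ ≤ √n := by
  classical
  calc ‖rectVandermonde α 1 k‖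
      = ‖(rectVandermonde α 1 n).submatrix id (Fin.castLE hkn)‖ := by
        congr 1; ext i j; simp [rectVandermonde_apply]
    _ ≤ ‖rectVandermonde α 1 n‖ :=
        l2_opNorm_submatrix_le _ Function.injective_id (Fin.castLE_injective hkn)
    _ ≤ √‖(n : 𝕜)‖ := l2_opNorm_le_sqrt_of_mul_conjTranspose_self_eq_smul_one
        (rectVandermonde_mul_conjTranspose_of_pow_eq_one hroot hinj)
    _ = √n := by rw [RCLike.norm_natCast]

/-- Let `m ≤ n` be positive integers and let `W` be the `m × m` Vandermonde matrix whose
evaluation points are distinct `n`-th roots of unity. Then `‖W‖₂ ≤ √n`. -/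
theorem vandermonde_roots_of_unity_opNorm_le (m n : ℕ) (hm : 0 < m) (hmn : m ≤ n)
    (α : Fin m → ℂ) (hroot : ∀ i, α i ^ n = 1) (hinj : Function.Injective α) :
    ‖Matrix.vandermonde α‖ ≤ Real.sqrt n := by
  rw [vandermonde_eq_projVandermonde]
  exact vandermonde_roots_of_unity_opNorm_le_general hmn hroot hinj
end

section
/- Let m ≤ n be positive integers, d = n − m, and let α_1, …, α_m be distinct n-th roots of unity, say α_j = ω_n^{k_j} with 0 ≤ k_1 < ⋯ < k_m < n. Then for every j ∈ {1, …, m}, the product of distances satisfies ∏_{j' ≠ j} |α_j − α_{j'}| ≥ n / 2^d. Equivalently, the diagonal matrix A with entries A_{jj} = ∏_{j' ≠ j} (α_j − α_{j'})^{−1} satisfies ‖A‖₂ = max_j |A_{jj}| ≤ 2^d / n. -/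
/-!
Evaluating the derivative of `X ^ n - 1 = ∏ z, (X - z)` at a root `a` shows that the product of the
distances from `a` to all the other `n`-th roots of unity is `|n * a ^ (n - 1)| = n`. Leaving out
`d` of the roots removes `d` factors, each at most the diameter `2` of the unit circle, so at least
`n / 2 ^ d` remains.
-/

open Finset
open scoped Matrix.Norms.L2Operator

open Polynomial (nthRootsFinset)

theorem prod_le_prod_mul_pow_card_sdiff {ι R : Type*} [DecidableEq ι] [CommMonoidWithZero R]
    [PartialOrder R] [ZeroLEOneClass R] [PosMulMono R] {s t : Finset ι} (hst : s ⊆ t) {f : ι → R}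
    {c : R} (hf : ∀ i ∈ t, 0 ≤ f i) (hc : ∀ i ∈ t \ s, f i ≤ c) :
    ∏ i ∈ t, f i ≤ (∏ i ∈ s, f i) * c ^ #(t \ s) := by
  rw [← prod_sdiff hst, mul_comm, ← prod_const]
  exact mul_le_mul_of_nonneg_left
    (prod_le_prod (fun i hi ↦ hf i (mem_sdiff.mp hi).1) hc)
    (prod_nonneg fun i hi ↦ hf i (hst hi))

theorem prod_nthRootsFinset_erase_sub {R : Type*} [CommRing R] [IsDomain R] [DecidableEq R]
    {n : ℕ} {ζ a : R} (hζ : IsPrimitiveRoot ζ n) (ha : a ∈ nthRootsFinset n (1 : R)) :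
    ∏ z ∈ (nthRootsFinset n (1 : R)).erase a, (a - z) = n * a ^ (n - 1) := by
  have hn : 0 < n := Nat.pos_of_ne_zero fun h ↦ by simp [h] at ha
  have hnodal : Lagrange.nodal (nthRootsFinset n (1 : R)) id = Polynomial.X ^ n - 1 :=
    (Polynomial.X_pow_sub_one_eq_prod hn hζ).symm
  calc ∏ z ∈ (nthRootsFinset n (1 : R)).erase a, (a - z)
      = (Lagrange.nodal (nthRootsFinset n (1 : R)) id).derivative.eval a :=
        (Lagrange.eval_nodal (v := id)).symm.trans
          (Lagrange.eval_nodal_derivative_eval_node_eq (v := id) ha).symm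
    _ = n * a ^ (n - 1) := by simp [hnodal, Polynomial.derivative_X_pow]

section NormedField

variable {K : Type*} [NormedField K] {n : ℕ} {ζ a : K}

theorem norm_eq_one_of_mem_nthRootsFinset (ha : a ∈ nthRootsFinset n (1 : K)) : ‖a‖ = 1 := by
  have hn : n ≠ 0 := fun h ↦ by simp [h] at ha
  rw [Polynomial.mem_nthRootsFinset (Nat.pos_of_ne_zero hn)] at ha
  rw [← pow_eq_one_iff_of_nonneg (norm_nonneg a) hn, ← norm_pow, ha, norm_one]

theorem prod_nthRootsFinset_erase_norm_sub [DecidableEq K] (hζ : IsPrimitiveRoot ζ n)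
    (ha : a ∈ nthRootsFinset n (1 : K)) :
    ∏ z ∈ (nthRootsFinset n (1 : K)).erase a, ‖a - z‖ = ‖(n : K)‖ := by
  rw [← norm_prod, prod_nthRootsFinset_erase_sub hζ ha, norm_mul, norm_pow,
    norm_eq_one_of_mem_nthRootsFinset ha, one_pow, mul_one]

theorem norm_natCast_div_two_pow_le_prod_erase_norm_sub [DecidableEq K] {s : Finset K}
    (hζ : IsPrimitiveRoot ζ n) (hs : s ⊆ nthRootsFinset n (1 : K)) (ha : a ∈ s) :
    ‖(n : K)‖ / 2 ^ (n - #s) ≤ ∏ z ∈ s.erase a, ‖a - z‖ := by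
  have hcard : #((nthRootsFinset n (1 : K)).erase a \ s.erase a) = n - #s := by
    rw [← erase_sdiff_distrib, erase_eq_of_notMem (notMem_sdiff_of_mem_right ha),
      card_sdiff_of_subset hs, hζ.card_nthRootsFinset]
  have hdist : ∀ z ∈ nthRootsFinset n (1 : K), ‖a - z‖ ≤ 2 := fun z hz ↦
    calc ‖a - z‖ ≤ ‖a‖ + ‖z‖ := norm_sub_le a z
      _ = 2 := by
        rw [norm_eq_one_of_mem_nthRootsFinset (hs ha), norm_eq_one_of_mem_nthRootsFinset hz,
          one_add_one_eq_two]
  rw [div_le_iff₀ (by positivity), ← prod_nthRootsFinset_erase_norm_sub hζ (hs ha), ← hcard]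
  exact prod_le_prod_mul_pow_card_sdiff (erase_subset_erase a hs) (fun _ _ ↦ norm_nonneg _)
    fun z hz ↦ hdist z (mem_of_mem_erase (mem_sdiff.mp hz).1)

theorem norm_natCast_div_two_pow_le_prod_norm_sub {ι : Type*} [Fintype ι] [DecidableEq ι]
    {α : ι → K} (hζ : IsPrimitiveRoot ζ n) (hα : ∀ i, α i ∈ nthRootsFinset n (1 : K))
    (hinj : Function.Injective α) (j : ι) :
    ‖(n : K)‖ / 2 ^ (n - Fintype.card ι) ≤ ∏ i ∈ univ.erase j, ‖α j - α i‖ := by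
  classical
  have h := norm_natCast_div_two_pow_le_prod_erase_norm_sub hζ
    (image_subset_iff.mpr fun i _ ↦ hα i) (mem_image_of_mem α (mem_univ j))
  rwa [card_image_of_injective _ hinj, card_univ, ← image_erase hinj,
    prod_image hinj.injOn] at h

end NormedField

theorem l2_opNorm_diagonal_inv_le {ι 𝕜 : Type*} [Fintype ι] [DecidableEq ι] [RCLike 𝕜]
    {v : ι → 𝕜} {c : ℝ} (hc : 0 < c) (hv : ∀ i, c ≤ ‖v i‖) :
    ‖Matrix.diagonal fun i ↦ (v i)⁻¹‖ ≤ c⁻¹ := by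
  rw [Matrix.l2_opNorm_diagonal, pi_norm_le_iff_of_nonneg (inv_nonneg.mpr hc.le)]
  intro i
  rw [norm_inv]
  exact inv_anti₀ hc (hv i)

/-- For distinct `n`-th roots of unity `α 1, …, α m` with `m ≤ n` and `d = n − m`:
the product of distances `∏_{j' ≠ j} |α j − α j'| ≥ n / 2^d` for every `j`, and the diagonal
matrix `A` with `A jj = ∏_{j' ≠ j} (α j − α j')⁻¹` satisfies `‖A‖₂ ≤ 2^d / n`. -/
theorem prod_dist_roots_of_unity_lower_bound (m n : ℕ) (hm : 0 < m) (hmn : m ≤ n)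
    (α : Fin m → ℂ) (hroot : ∀ i, α i ^ n = 1) (hinj : Function.Injective α) :
    (∀ j : Fin m,
      (n : ℝ) / 2 ^ (n - m) ≤ ∏ j' ∈ univ.erase j, ‖α j - α j'‖) ∧
    ‖(Matrix.diagonal fun j => (∏ j' ∈ univ.erase j, (α j - α j'))⁻¹ :
        Matrix (Fin m) (Fin m) ℂ)‖ ≤ 2 ^ (n - m) / n := by
  have hn : 0 < n := hm.trans_le hmn
  have hprod (j : Fin m) : (n : ℝ) / 2 ^ (n - m) ≤ ∏ j' ∈ univ.erase j, ‖α j - α j'‖ := by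
    simpa only [Complex.norm_natCast, Fintype.card_fin] using
      norm_natCast_div_two_pow_le_prod_norm_sub (Complex.isPrimitiveRoot_exp n hn.ne')
        (fun i ↦ (Polynomial.mem_nthRootsFinset hn 1).mpr (hroot i)) hinj j
  refine ⟨hprod, ?_⟩
  rw [← inv_div]
  exact l2_opNorm_diagonal_inv_le (by positivity) fun j ↦ (hprod j).trans_eq (norm_prod _ _).symm
end

section
/- Let m ≤ n be positive integers, d = n − m, let α_1, …, α_m be distinct n-th roots of unity, and let β_i = ω_{2mn} · ω_m^{i−1} for i ∈ {1, …, m}. Let C be the m × m matrix with entries C_{ij} = ∏_{j' ≠ j} (β_i − α_{j'}). Then every entry of C satisfies |C_{ij}| ≤ m n^{d+1} / (2^d · d!). -/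
open Finset

/-!
Let `w` be any unit complex number. Exactly `d + 1` of the `n`-th roots of unity do not occur among
the factors; discard one of them, `z₀`. The product of `w - z` over all `n`-th roots of unity
`z ≠ z₀` is the geometric sum `∑ i < n, w ^ i * z₀ ^ (n - 1 - i)`, of norm at most `n`, and it is
the wanted product times `d` extra factors. At most `k` roots of unity have angle less than
`π k / n` with `w`, and chords are at least `2 / π` times arcs, so for `z₀` the closest of the
unused roots the extra factors are, in increasing order, at least `2 k / n` for `k = 1, …, d`.
-/

open Polynomial InnerProductGeometry
open Complex (I exp)
open scoped Real Nat

lemma exists_prod_range_le_prod_erase {ι R : Type*} [DecidableEq ι] [CommSemiring R]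
    [LinearOrder R] [IsOrderedRing R] {f : ι → R} {b : ℕ → R} (hb : ∀ k, 0 ≤ b k) {d : ℕ}
    {s : Finset ι} (hs : #s = d + 1) (hcount : ∀ k, #{i ∈ s | f i < b k} ≤ k) :
    ∃ i₀ ∈ s, ∏ k ∈ range d, b (k + 1) ≤ ∏ i ∈ s.erase i₀, f i := by
  induction d generalizing s with
  | zero =>
    obtain ⟨i₀, rfl⟩ := card_eq_one.mp hs
    exact ⟨i₀, by simp⟩
  | succ d ih =>
    obtain ⟨j, hj, hbj⟩ : ∃ j ∈ s, b (d + 1) ≤ f j := by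
      by_contra! hlt
      have hall := hcount (d + 1)
      rw [filter_true_of_mem hlt, hs] at hall
      lia
    have hcount' (k : ℕ) : #{i ∈ s.erase j | f i < b k} ≤ k :=
      (card_le_card (filter_subset_filter _ (erase_subset j s))).trans (hcount k)
    obtain ⟨i₀, hi₀, hle⟩ := ih (by rw [card_erase_of_mem hj, hs]; rfl) hcount'
    obtain ⟨hne, hi₀s⟩ := mem_erase.mp hi₀
    refine ⟨i₀, hi₀s, ?_⟩
    calc ∏ k ∈ range (d + 1), b (k + 1)
        = (∏ k ∈ range d, b (k + 1)) * b (d + 1) := prod_range_succ _ d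
      _ ≤ (∏ i ∈ (s.erase j).erase i₀, f i) * f j :=
        mul_le_mul hle hbj (hb _) ((prod_nonneg fun _ _ ↦ hb _).trans hle)
      _ = ∏ i ∈ s.erase i₀, f i := by
        rw [erase_right_comm, prod_erase_mul _ _ (mem_erase.mpr ⟨hne.symm, hj⟩)]

lemma card_Ioo_floor_ceil_add_natCast_le {R : Type*} [Ring R] [LinearOrder R]
    [IsStrictOrderedRing R] [FloorRing R] (a : R) (k : ℕ) : #(Ioo ⌊a⌋ ⌈a + k⌉) ≤ k := by
  rw [Int.card_Ioo, Int.ceil_add_natCast]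
  have := Int.ceil_le_floor_add_one a
  lia

lemma exists_int_eq_exp_and_angle_eq {n : ℕ} (hn : n ≠ 0) {z : ℂ} (hz : z ^ n = 1) (t : ℝ) :
    ∃ y : ℤ, z = exp ((2 * π * y / n : ℝ) * I) ∧
      angle (exp (t * I)) z = |t - 2 * π * y / n| := by
  have hz0 : z ≠ 0 := by
    rintro rfl
    simp [hn] at hz
  set θ : ℝ := (exp (t * I) / z).arg
  have hz_exp : z = exp ((t - θ : ℝ) * I) := by
    have hquot : exp (θ * I) = exp (t * I) / z := by
      have hnorm : ‖exp (t * I) / z‖ = 1 := by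
        rw [norm_div, Complex.norm_exp_ofReal_mul_I, Complex.norm_eq_one_of_pow_eq_one hz hn,
          div_one]
      simpa only [hnorm, Complex.ofReal_one, one_mul] using
        Complex.norm_mul_exp_arg_mul_I (exp (t * I) / z)
    rw [Complex.ofReal_sub, sub_mul, Complex.exp_sub, hquot,
      div_div_cancel₀ (Complex.exp_ne_zero _)]
  rw [hz_exp, ← Complex.exp_nat_mul, Complex.exp_eq_one_iff] at hz
  obtain ⟨y, hy⟩ := hz
  have hθ_eq : t - θ = 2 * π * y / n := by
    rw [eq_div_iff (by exact_mod_cast hn)]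
    have hcomplex : ((t - θ : ℝ) * n : ℂ) = 2 * π * y :=
      mul_right_cancel₀ Complex.I_ne_zero (by linear_combination hy)
    exact_mod_cast hcomplex
  refine ⟨y, hθ_eq ▸ hz_exp, ?_⟩
  rw [Complex.angle_eq_abs_arg (Complex.exp_ne_zero _) hz0, ← hθ_eq, sub_sub_cancel]

lemma card_nthRootsFinset_angle_lt_le (n k : ℕ) {w : ℂ} (hw : ‖w‖ = 1) :
    #{z ∈ nthRootsFinset n (1 : ℂ) | angle w z < π * k / n} ≤ k := by
  rcases n.eq_zero_or_pos with rfl | hn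
  · simp
  obtain ⟨t, -, rfl⟩ := Complex.norm_eq_one_iff'.mp hw
  set a : ℝ := n * t / (2 * π) - k / 2 with ha
  have hsub : {z ∈ nthRootsFinset n (1 : ℂ) | angle (exp (t * I)) z < π * k / n} ⊆
      (Ioo ⌊a⌋ ⌈a + k⌉).image fun y : ℤ ↦ exp ((2 * π * y / n : ℝ) * I) := by
    intro z hz
    obtain ⟨hz, hlt⟩ := mem_filter.mp hz
    obtain ⟨y, rfl, hangle⟩ :=
      exists_int_eq_exp_and_angle_eq hn.ne' ((mem_nthRootsFinset hn 1).mp hz) t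
    rw [hangle] at hlt
    have hlt' : |n * t / (2 * π) - y| < k / 2 := by
      have hscale : n * t / (2 * π) - y = n / (2 * π) * (t - 2 * π * y / n) := by
        field_simp
      rw [hscale, abs_mul, abs_of_pos (by positivity)]
      calc n / (2 * π) * |t - 2 * π * y / n| < n / (2 * π) * (π * k / n) := by gcongr
        _ = k / 2 := by field_simp
    obtain ⟨hlo, hhi⟩ := abs_lt.mp hlt'
    exact mem_image_of_mem _
      (mem_Ioo.mpr ⟨Int.floor_lt.mpr (by linarith), Int.lt_ceil.mpr (by linarith)⟩)
  exact (card_le_card hsub).trans (card_image_le.trans (card_Ioo_floor_ceil_add_natCast_le a k))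

lemma card_nthRootsFinset_norm_sub_lt_le (n k : ℕ) {w : ℂ} (hw : ‖w‖ = 1) :
    #{z ∈ nthRootsFinset n (1 : ℂ) | ‖w - z‖ < 2 / n * k} ≤ k := by
  rcases n.eq_zero_or_pos with rfl | hn
  · simp
  refine (card_le_card (monotone_filter_right _ fun z hz hlt ↦ ?_)).trans
    (card_nthRootsFinset_angle_lt_le n k hw)
  have hz_norm : ‖z‖ = 1 :=
    Complex.norm_eq_one_of_pow_eq_one ((mem_nthRootsFinset hn 1).mp hz) hn.ne'
  calc angle w z ≤ π / 2 * ‖w - z‖ := Complex.angle_le_mul_norm_sub hw hz_norm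
    _ < π / 2 * (2 / n * k) := by gcongr
    _ = π * k / n := by field_simp

lemma prod_erase_nthRootsFinset_sub {R : Type*} [CommRing R] [IsDomain R] [DecidableEq R] {n : ℕ}
    (hn : 0 < n) {ζ z₀ : R} (hζ : IsPrimitiveRoot ζ n) (hz₀ : z₀ ^ n = 1) (w : R) :
    ∏ z ∈ (nthRootsFinset n (1 : R)).erase z₀, (w - z) =
      ∑ i ∈ range n, w ^ i * z₀ ^ (n - 1 - i) := by
  have hpoly : ∏ z ∈ (nthRootsFinset n (1 : R)).erase z₀, (X - C z) =
      ∑ i ∈ range n, X ^ i * C z₀ ^ (n - 1 - i) := by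
    refine mul_right_cancel₀ (X_sub_C_ne_zero z₀) ?_
    rw [prod_erase_mul _ _ ((mem_nthRootsFinset hn 1).mpr hz₀), ← X_pow_sub_one_eq_prod hn hζ,
      geom_sum₂_mul, ← C_pow, hz₀, C_1]
  simpa [eval_prod, eval_finsetSum] using congrArg (eval w) hpoly

lemma norm_prod_erase_nthRootsFinset_sub_le {n : ℕ} (hn : 0 < n) {z₀ w : ℂ} (hz₀ : z₀ ^ n = 1)
    (hw : ‖w‖ ≤ 1) : ‖∏ z ∈ (nthRootsFinset n (1 : ℂ)).erase z₀, (w - z)‖ ≤ n := by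
  rw [prod_erase_nthRootsFinset_sub hn (Complex.isPrimitiveRoot_exp n hn.ne') hz₀]
  have hterm (i : ℕ) : ‖w ^ i * z₀ ^ (n - 1 - i)‖ ≤ 1 := by
    rw [norm_mul, norm_pow, norm_pow, Complex.norm_eq_one_of_pow_eq_one hz₀ hn.ne', one_pow,
      mul_one]
    exact pow_le_one₀ (norm_nonneg w) hw
  simpa using norm_sum_le_of_le (range n) fun i _ ↦ hterm i

lemma norm_prod_sub_le_of_subset_nthRootsFinset {n d : ℕ} {T : Finset ℂ}
    (hT : T ⊆ nthRootsFinset n 1) (hcard : #T + d + 1 = n) {w : ℂ} (hw : ‖w‖ = 1) :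
    ‖∏ z ∈ T, (w - z)‖ ≤ (n : ℝ) ^ (d + 1) / (2 ^ d * d !) := by
  have hn : 0 < n := by lia
  set U := nthRootsFinset n (1 : ℂ)
  have hUT : #(U \ T) = d + 1 := by
    rw [card_sdiff_of_subset hT, (Complex.isPrimitiveRoot_exp n hn.ne').card_nthRootsFinset]
    lia
  obtain ⟨z₀, hz₀, hextra⟩ : ∃ z₀ ∈ U \ T,
      ∏ k ∈ range d, (2 / n * (k + 1 : ℕ) : ℝ) ≤ ∏ z ∈ (U \ T).erase z₀, ‖w - z‖ :=
    exists_prod_range_le_prod_erase (f := fun z ↦ ‖w - z‖) (b := fun k ↦ (2 / n * k : ℝ))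
      (fun k ↦ by positivity) hUT fun k ↦
        (card_le_card (filter_subset_filter _ sdiff_subset)).trans
          (card_nthRootsFinset_norm_sub_lt_le n k hw)
  obtain ⟨hz₀U, hz₀T⟩ := mem_sdiff.mp hz₀
  rw [prod_mul_distrib, prod_const, card_range, ← Nat.cast_prod, prod_range_add_one_eq_factorial,
    ← norm_prod] at hextra
  have hsplit : (∏ z ∈ (U \ T).erase z₀, (w - z)) * ∏ z ∈ T, (w - z) =
      ∏ z ∈ U.erase z₀, (w - z) := by
    rw [← erase_sdiff_comm, prod_sdiff (subset_erase.mpr ⟨hT, hz₀T⟩)]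
  have hbound : (2 / n) ^ d * d ! * ‖∏ z ∈ T, (w - z)‖ ≤ n :=
    calc (2 / n) ^ d * d ! * ‖∏ z ∈ T, (w - z)‖
        ≤ ‖∏ z ∈ (U \ T).erase z₀, (w - z)‖ * ‖∏ z ∈ T, (w - z)‖ := by gcongr
      _ = ‖∏ z ∈ U.erase z₀, (w - z)‖ := by rw [← norm_mul, hsplit]
      _ ≤ n := norm_prod_erase_nthRootsFinset_sub_le hn ((mem_nthRootsFinset hn 1).mp hz₀U) hw.le
  calc ‖∏ z ∈ T, (w - z)‖
      = (2 / n) ^ d * d ! * ‖∏ z ∈ T, (w - z)‖ * (n ^ d / (2 ^ d * d !)) := by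
        rw [div_pow]
        field_simp
    _ ≤ n * (n ^ d / (2 ^ d * d !)) := by gcongr
    _ = n ^ (d + 1) / (2 ^ d * d !) := by ring

lemma norm_exp_two_pi_mul_I_div_natCast (N : ℕ) : ‖exp (2 * π * I / N)‖ = 1 := by
  have harg : 2 * π * I / N = (2 * π / N : ℝ) * I := by
    push_cast
    ring
  rw [harg, Complex.norm_exp_ofReal_mul_I]

lemma norm_exp_mul_exp_pow_eq_one (m n i : ℕ) :
    ‖exp (2 * π * I / (2 * m * n)) * exp (2 * π * I / m) ^ i‖ = 1 := by
  have hshift : ‖exp (2 * π * I / (2 * m * n))‖ = 1 := by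
    exact_mod_cast norm_exp_two_pi_mul_I_div_natCast (2 * m * n)
  rw [norm_mul, norm_pow, hshift, norm_exp_two_pi_mul_I_div_natCast, one_pow, one_mul]

theorem C_matrix_entry_bound_general {m n : ℕ} (hmn : m ≤ n) {α : Fin m → ℂ}
    (hroot : ∀ i, α i ^ n = 1) (hinj : Function.Injective α) {w : ℂ} (hw : ‖w‖ = 1) (j : Fin m) :
    ‖∏ j' ∈ univ.erase j, (w - α j')‖ ≤ (n : ℝ) ^ (n - m + 1) / (2 ^ (n - m) * (n - m)!) := by
  have hm : 0 < m := j.pos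
  rw [← prod_image (f := fun z ↦ w - z) hinj.injOn]
  refine norm_prod_sub_le_of_subset_nthRootsFinset ?_ ?_ hw
  · exact image_subset_iff.mpr fun i _ ↦ (mem_nthRootsFinset (hm.trans_le hmn) 1).mpr (hroot i)
  · rw [card_image_of_injective _ hinj, card_erase_of_mem (mem_univ j), card_fin]
    lia

/-- With `α 1, …, α m` distinct `n`-th roots of unity (`m ≤ n`, `d = n − m`) and
`β i = ω_{2mn} · ω_m^{i−1}`, the matrix `C` with `C i j = ∏_{j' ≠ j} (β i − α j')`
satisfies `|C i j| ≤ m n^{d+1} / (2^d d!)` for all entries. -/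
theorem C_matrix_entry_bound (m n : ℕ) (hm : 0 < m) (hmn : m ≤ n)
    (α : Fin m → ℂ) (hroot : ∀ i, α i ^ n = 1) (hinj : Function.Injective α)
    (β : Fin m → ℂ)
    (hβ : ∀ i : Fin m, β i =
      Complex.exp (2 * Real.pi * Complex.I / (2 * m * n)) *
        Complex.exp (2 * Real.pi * Complex.I / m) ^ (i : ℕ)) :
    ∀ i j : Fin m,
      ‖∏ j' ∈ univ.erase j, (β i - α j')‖ ≤
        m * (n : ℝ) ^ (n - m + 1) / (2 ^ (n - m) * (Nat.factorial (n - m))) := by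
  intro i j
  have hβ_norm : ‖β i‖ = 1 := hβ i ▸ norm_exp_mul_exp_pow_eq_one m n i
  refine (C_matrix_entry_bound_general hmn hroot hinj hβ_norm j).trans ?_
  gcongr
  exact le_mul_of_one_le_left (by positivity) (by exact_mod_cast hm)
end

section
/- Let m ≤ n be positive integers and let W be the m × m Vandermonde matrix whose evaluation points are distinct n-th roots of unity. Then, with d = n − m, the spectral norm of the inverse satisfies ‖W⁻¹‖₂ ≤ n^{d + 3/2} / d!. -/
open scoped Matrix.Norms.L2Operator
open Finset Polynomial

/-! The spectral norm is at most the Frobenius norm, so it suffices to bound the columns of `W⁻¹`.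
The `i`-th one holds the coefficients of the Lagrange basis polynomial `ℓᵢ` of the set `A` of
evaluation points. By Parseval over the `n`-th roots of unity its squared norm is `n⁻¹ ∑ |ℓᵢ(ζ)|²`,
where the points of `A` contribute `1` and the `d` points `b` of the complement `B` contribute
`|ℓᵢ(b)|²`. Since the derivative of `X ^ n - 1` has constant modulus `n` on the roots of unity,
`|ℓᵢ(b)|` equals the modulus at `αᵢ` of the Lagrange basis polynomial of `B` at `b`. The latter is a
product of only `d - 1` quotients; its numerators are at most `2`, and the denominators multiply to
at least `(d - 1)! (2 / n) ^ (d - 1)`, because roots of unity that are `k ≤ n / 2` steps apart have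
distance at least `4 k / n`. -/

theorem sq_l2_opNorm_le_sum_sq_norm {𝕜 m n : Type*} [RCLike 𝕜] [Fintype m] [Fintype n]
    [DecidableEq n] (A : Matrix m n 𝕜) : ‖A‖ ^ 2 ≤ ∑ i, ∑ j, ‖A i j‖ ^ 2 := by
  rw [← Real.le_sqrt (norm_nonneg _) (by positivity), Matrix.l2_opNorm_def]
  refine ContinuousLinearMap.opNorm_le_bound _ (Real.sqrt_nonneg _) fun x ↦ ?_
  have row_le (i : m) : ‖∑ j, A i j * x j‖ ^ 2 ≤ (∑ j, ‖A i j‖ ^ 2) * ‖x‖ ^ 2 := calc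
    ‖∑ j, A i j * x j‖ ^ 2 ≤ (∑ j, ‖A i j‖ * ‖x j‖) ^ 2 := by
      gcongr
      exact norm_sum_le_of_le _ fun j _ ↦ norm_mul_le _ _
    _ ≤ (∑ j, ‖A i j‖ ^ 2) * ∑ j, ‖x j‖ ^ 2 := sum_mul_sq_le_sq_mul_sq _ _ _
    _ = (∑ j, ‖A i j‖ ^ 2) * ‖x‖ ^ 2 := by rw [EuclideanSpace.norm_sq_eq]
  refine le_of_sq_le_sq ?_ (by positivity)
  rw [mul_pow, Real.sq_sqrt (by positivity), EuclideanSpace.norm_sq_eq, sum_mul]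
  exact sum_le_sum fun i _ ↦ row_le i

theorem inv_vandermonde_eq_of_coeff_basis {F : Type*} [Field F] {m : ℕ} {v : Fin m → F}
    (hv : Function.Injective v) :
    (Matrix.vandermonde v)⁻¹ = Matrix.of fun j i : Fin m ↦ (Lagrange.basis univ v i).coeff j := by
  refine Matrix.inv_eq_right_inv (Matrix.ext fun i k ↦ ?_)
  have natDegree_lt : (Lagrange.basis univ v k).natDegree < m := by
    rw [Lagrange.natDegree_basis hv.injOn (mem_univ k), card_univ, Fintype.card_fin]
    exact Nat.sub_lt k.pos one_pos
  calc (Matrix.vandermonde v * Matrix.of fun j i : Fin m ↦ (Lagrange.basis univ v i).coeff j) i k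
      = ∑ j : Fin m, (Lagrange.basis univ v k).coeff j * v i ^ (j : ℕ) := by
        simp only [Matrix.mul_apply, Matrix.vandermonde_apply, Matrix.of_apply, mul_comm]
    _ = (Lagrange.basis univ v k).eval (v i) := by
        rw [eval_eq_sum_range' natDegree_lt, Fin.sum_univ_eq_sum_range
          (fun j ↦ (Lagrange.basis univ v k).coeff j * v i ^ j)]
    _ = (1 : Matrix (Fin m) (Fin m) F) i k := by
        rcases eq_or_ne i k with rfl | hik
        · rw [Lagrange.eval_basis_self hv.injOn (mem_univ i), Matrix.one_apply_eq]
        · rw [Lagrange.eval_basis_of_ne hik.symm (mem_univ i), Matrix.one_apply_ne hik]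

section Lagrange

variable {F ι : Type*} [Field F] [DecidableEq ι]

theorem lagrangeBasis_image_id [DecidableEq F] {v : ι → F} (hv : Function.Injective v)
    (s : Finset ι) (i : ι) :
    Lagrange.basis (s.image v) id (v i) = Lagrange.basis s v i := by
  rw [Lagrange.basis, Lagrange.basis, ← image_erase hv, prod_image hv.injOn]
  rfl

theorem eval_lagrangeBasis (s : Finset ι) (v : ι → F) (i : ι) (x : F) :
    (Lagrange.basis s v i).eval x = ∏ j ∈ s.erase i, (x - v j) / (v i - v j) := by
  simp only [Lagrange.basis, eval_prod, Lagrange.basisDivisor, eval_mul, eval_C, eval_sub, eval_X,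
    div_eq_inv_mul]

theorem eval_lagrangeBasis_mul_eval_derivative_nodal {s t : Finset ι} {v : ι → F}
    (hvs : Set.InjOn v s) (hst : Disjoint s t) {i j : ι} (hi : i ∈ s) (hj : j ∈ t) :
    (Lagrange.basis s v i).eval (v j) * (derivative (Lagrange.nodal (s ∪ t) v)).eval (v i) =
      (∏ k ∈ s.erase i, (v j - v k)) * (∏ k ∈ t.erase j, (v i - v k)) * (v i - v j) := by
  have denom_ne_zero : ∏ k ∈ s.erase i, (v i - v k) ≠ 0 := prod_ne_zero_iff.2 fun k hk ↦
    sub_ne_zero.2 fun h ↦ ne_of_mem_erase hk (hvs (mem_of_mem_erase hk) hi h.symm)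
  have hit : i ∉ t := disjoint_left.1 hst hi
  rw [Lagrange.eval_nodal_derivative_eval_node_eq (mem_union_left t hi), Lagrange.eval_nodal,
    erase_union_distrib, erase_eq_of_notMem hit,
    prod_union (hst.mono_left (erase_subset i s)), eval_lagrangeBasis, prod_div_distrib,
    ← mul_assoc, div_mul_cancel₀ _ denom_ne_zero, ← prod_erase_mul t _ hj, mul_assoc]

theorem eval_lagrangeBasis_mul_derivative_nodal_antisymm {s t : Finset ι} {v : ι → F}
    (hvs : Set.InjOn v s) (hvt : Set.InjOn v t) (hst : Disjoint s t) {i j : ι}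
    (hi : i ∈ s) (hj : j ∈ t) :
    (Lagrange.basis s v i).eval (v j) * (derivative (Lagrange.nodal (s ∪ t) v)).eval (v i) =
      -((Lagrange.basis t v j).eval (v i) *
        (derivative (Lagrange.nodal (s ∪ t) v)).eval (v j)) := by
  rw [eval_lagrangeBasis_mul_eval_derivative_nodal hvs hst hi hj, union_comm s t,
    eval_lagrangeBasis_mul_eval_derivative_nodal hvt hst.symm hj hi]
  ring

end Lagrange

section PrimitiveRoot

variable {K : Type*} [Field K] {n : ℕ} {ω : K}

theorem nodal_nthRootsFinset_one (hω : IsPrimitiveRoot ω n) (hn : 0 < n) :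
    Lagrange.nodal (nthRootsFinset n (1 : K)) id = X ^ n - 1 :=
  (X_pow_sub_one_eq_prod hn hω).symm

theorem sum_zpow_nthRootsFinset_one (hω : IsPrimitiveRoot ω n) (hn : 0 < n) (k : ℤ) :
    ∑ ζ ∈ nthRootsFinset n (1 : K), ζ ^ k = if (n : ℤ) ∣ k then (n : K) else 0 := by
  split_ifs with hk
  · obtain ⟨l, rfl⟩ := hk
    have zpow_eq_one (ζ : K) (hζ : ζ ∈ nthRootsFinset n (1 : K)) : ζ ^ (n * l : ℤ) = 1 := by
      rw [zpow_mul, zpow_natCast, (mem_nthRootsFinset hn 1).1 hζ, one_zpow]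
    rw [sum_congr rfl zpow_eq_one, sum_const, hω.card_nthRootsFinset, nsmul_one]
  · have hω0 : ω ≠ 0 := hω.ne_zero hn.ne'
    have rotate : ∑ ζ ∈ nthRootsFinset n (1 : K), (ω * ζ) ^ k =
        ∑ ζ ∈ nthRootsFinset n (1 : K), ζ ^ k :=
      sum_equiv (Equiv.mulLeft₀ ω hω0)
        (fun ζ ↦ by simp [mem_nthRootsFinset hn, mul_pow, hω.pow_eq_one]) fun _ _ ↦ rfl
    simp only [mul_zpow, ← mul_sum] at rotate
    exact (mul_left_eq_self₀.1 rotate).resolve_left fun h ↦ hk ((hω.zpow_eq_one_iff_dvd k).1 h)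

end PrimitiveRoot

theorem card_le_two_mul_of_natAbs_le {S : Finset ℤ} (h0 : 0 ∉ S) {K : ℕ}
    (hS : ∀ k ∈ S, k.natAbs ≤ K) : #S ≤ 2 * K := by
  have hsub : S ⊆ (Icc (-K : ℤ) K).erase 0 := fun k hk ↦
    mem_erase.2 ⟨fun h ↦ h0 (h ▸ hk), mem_Icc.2 (by have := hS k hk; omega)⟩
  have hcard := card_le_card hsub
  rw [card_erase_of_mem (by simp), Int.card_Icc] at hcard
  omega

theorem factorial_card_le_prod_two_mul_natAbs {S : Finset ℤ} (h0 : 0 ∉ S) :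
    (#S).factorial ≤ ∏ k ∈ S, 2 * k.natAbs := by
  induction S using Finset.induction_on_max_value Int.natAbs with
  | empty => simp
  | insert a S ha hmax ih =>
    have hcard : #(insert a S) ≤ 2 * a.natAbs :=
      card_le_two_mul_of_natAbs_le h0 (forall_mem_insert _ _ _ |>.2 ⟨le_rfl, hmax⟩)
    rw [card_insert_of_notMem ha] at hcard ⊢
    rw [prod_insert ha, Nat.factorial_succ]
    exact Nat.mul_le_mul hcard (ih fun h ↦ h0 (mem_insert_of_mem h))

theorem one_add_mul_sq_le_mul_sq_pow_div_factorial {n d : ℕ} (hd : d < n) :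
    1 + d * ((n : ℝ) ^ (d - 1) / (d - 1).factorial) ^ 2 ≤ n * ((n : ℝ) ^ d / d.factorial) ^ 2 := by
  have hdn : (d : ℝ) + 1 ≤ n := by exact_mod_cast hd
  have hn : (0 : ℝ) < n := d.cast_nonneg.trans_lt (Nat.cast_lt.2 hd)
  set K := (n : ℝ) ^ d / d.factorial with hK
  have one_le : 1 ≤ K := by
    rw [hK, one_le_div (by positivity)]
    exact_mod_cast (Nat.factorial_le_pow d).trans (Nat.pow_le_pow_left hd.le d)
  have shift : d * ((n : ℝ) ^ (d - 1) / (d - 1).factorial) ^ 2 = d ^ 3 / n ^ 2 * K ^ 2 := by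
    rcases d with _ | d
    · simp
    · rw [hK, Nat.add_sub_cancel, Nat.factorial_succ]
      push_cast
      field_simp
      ring
  have coeff_le : 1 + (d : ℝ) ^ 3 / n ^ 2 ≤ n := by
    rw [← le_sub_iff_add_le', div_le_iff₀ (by positivity), pow_succ']
    gcongr <;> linarith
  calc 1 + d * ((n : ℝ) ^ (d - 1) / (d - 1).factorial) ^ 2
      ≤ K ^ 2 + d ^ 3 / n ^ 2 * K ^ 2 := by rw [shift]; gcongr; exact one_le_pow₀ one_le
    _ = (1 + d ^ 3 / n ^ 2) * K ^ 2 := by ring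
    _ ≤ n * K ^ 2 := by gcongr

section ComplexRootsOfUnity

variable {n : ℕ}

theorem exists_int_arg_eq_of_pow_eq_one (hn : 0 < n) {z : ℂ} (hz : z ^ n = 1) :
    ∃ k : ℤ, z.arg = 2 * Real.pi * k / n := by
  have hangle : ((n * z.arg : ℝ) : Real.Angle) = (0 : ℝ) := by
    rw [← nsmul_eq_mul, Real.Angle.coe_nsmul, ← Complex.arg_pow_coe_angle, hz, Complex.arg_one]
  obtain ⟨k, hk⟩ := Real.Angle.angle_eq_iff_two_pi_dvd_sub.1 hangle
  exact ⟨k, by rw [eq_div_iff (by positivity)]; linarith⟩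

theorem eq_of_arg_div_eq_of_norm_eq {b z w : ℂ} (hb : b ≠ 0) (hnorm : ‖z‖ = ‖w‖)
    (harg : (z / b).arg = (w / b).arg) : z = w :=
  (div_left_inj' hb).1 (Complex.ext_norm_arg (by rw [norm_div, norm_div, hnorm]) harg)

theorem two_mul_abs_le_of_arg_div_eq (hn : 0 < n) {b z : ℂ} (hb : ‖b‖ = 1) (hz : ‖z‖ = 1) {k : ℤ}
    (hk : (z / b).arg = 2 * Real.pi * k / n) : 2 * |(k : ℝ)| ≤ n / 2 * ‖b - z‖ := by
  have hn' : (0 : ℝ) < n := Nat.cast_pos.2 hn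
  have b_ne_zero : b ≠ 0 := norm_ne_zero_iff.1 (hb ▸ one_ne_zero)
  have z_ne_zero : z ≠ 0 := norm_ne_zero_iff.1 (hz ▸ one_ne_zero)
  have arc_le_chord := Complex.angle_le_mul_norm_sub hz hb
  rw [Complex.angle_eq_abs_arg z_ne_zero b_ne_zero, hk, abs_div, abs_mul,
    abs_of_pos Real.two_pi_pos, abs_of_pos hn', div_le_iff₀ hn', norm_sub_rev] at arc_le_chord
  refine le_of_mul_le_mul_left ?_ Real.pi_pos
  linarith

theorem factorial_card_le_prod_norm_sub (hn : 0 < n) {T : Finset ℂ} (hT : ∀ z ∈ T, z ^ n = 1)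
    {b : ℂ} (hb : b ^ n = 1) (hbT : b ∉ T) :
    ((#T).factorial : ℝ) ≤ ∏ z ∈ T, (n / 2 * ‖b - z‖) := by
  have norm_b : ‖b‖ = 1 := Complex.norm_eq_one_of_pow_eq_one hb hn.ne'
  have norm_eq_one (z : ℂ) (hz : z ∈ T) : ‖z‖ = 1 :=
    Complex.norm_eq_one_of_pow_eq_one (hT z hz) hn.ne'
  have b_ne_zero : b ≠ 0 := norm_ne_zero_iff.1 (norm_b ▸ one_ne_zero)
  have exists_steps (z : ℂ) (hz : z ∈ T) : ∃ k : ℤ, (z / b).arg = 2 * Real.pi * k / n :=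
    exists_int_arg_eq_of_pow_eq_one hn (by rw [div_pow, hT z hz, hb, div_one])
  choose! steps arg_eq using exists_steps
  have steps_injOn : Set.InjOn steps T := fun z hz w hw h ↦
    eq_of_arg_div_eq_of_norm_eq b_ne_zero ((norm_eq_one z hz).trans (norm_eq_one w hw).symm)
      (by rw [arg_eq z hz, arg_eq w hw, h])
  have steps_ne_zero (z : ℂ) (hz : z ∈ T) : steps z ≠ 0 := fun h ↦ by
    have z_eq_b : z = b :=
      eq_of_arg_div_eq_of_norm_eq b_ne_zero ((norm_eq_one z hz).trans norm_b.symm)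
        (by rw [arg_eq z hz, h, div_self b_ne_zero, Complex.arg_one, Int.cast_zero, mul_zero,
          zero_div])
    exact hbT (z_eq_b ▸ hz)
  have zero_notMem : 0 ∉ T.image steps := by simpa using steps_ne_zero
  calc ((#T).factorial : ℝ) ≤ ((∏ z ∈ T, 2 * (steps z).natAbs : ℕ) : ℝ) := by
        rw [← card_image_of_injOn steps_injOn, ← prod_image (g := steps) steps_injOn
          (f := fun k : ℤ ↦ 2 * k.natAbs)]
        exact Nat.cast_le.2 (factorial_card_le_prod_two_mul_natAbs zero_notMem)
    _ = ∏ z ∈ T, 2 * |(steps z : ℝ)| := by simp only [Nat.cast_prod, Nat.cast_mul,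
        Nat.cast_ofNat, Nat.cast_natAbs, Int.cast_abs]
    _ ≤ ∏ z ∈ T, (n / 2 * ‖b - z‖) := by
        refine prod_le_prod (fun _ _ ↦ by positivity) fun z hz ↦ ?_
        exact two_mul_abs_le_of_arg_div_eq hn norm_b (norm_eq_one z hz) (arg_eq z hz)

theorem norm_eval_lagrangeBasis_le_of_norm_le_one (hn : 0 < n) {B : Finset ℂ}
    (hB : B ⊆ nthRootsFinset n (1 : ℂ)) {a b : ℂ} (ha : ‖a‖ ≤ 1) (hb : b ∈ B) :
    ‖(Lagrange.basis B id b).eval a‖ ≤ (n : ℝ) ^ (#B - 1) / (#B - 1).factorial := by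
  have pow_eq_one (z : ℂ) (hz : z ∈ B) : z ^ n = 1 := (mem_nthRootsFinset hn 1).1 (hB hz)
  have denom_pos : 0 < ∏ z ∈ B.erase b, ‖b - z‖ := prod_pos fun z hz ↦
    norm_pos_iff.2 (sub_ne_zero.2 (ne_of_mem_erase hz).symm)
  have num_le : ∏ z ∈ B.erase b, ‖a - z‖ ≤ 2 ^ #(B.erase b) := by
    rw [← prod_const]
    refine prod_le_prod (fun _ _ ↦ norm_nonneg _) fun z hz ↦ ?_
    have norm_z := Complex.norm_eq_one_of_pow_eq_one (pow_eq_one z (mem_of_mem_erase hz)) hn.ne'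
    linarith [norm_sub_le a z]
  have le_denom := factorial_card_le_prod_norm_sub hn
    (fun z hz ↦ pow_eq_one z (mem_of_mem_erase hz)) (pow_eq_one b hb) (notMem_erase b B)
  rw [eval_lagrangeBasis, norm_prod, ← card_erase_of_mem hb]
  simp only [id, norm_div, prod_div_distrib]
  rw [div_le_div_iff₀ denom_pos (by positivity)]
  calc (∏ z ∈ B.erase b, ‖a - z‖) * (#(B.erase b)).factorial
      ≤ 2 ^ #(B.erase b) * ∏ z ∈ B.erase b, (n / 2 * ‖b - z‖) := by gcongr
    _ = n ^ #(B.erase b) * ∏ z ∈ B.erase b, ‖b - z‖ := by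
        rw [prod_mul_distrib, prod_const, ← mul_assoc, ← mul_pow, mul_div_cancel₀ _ two_ne_zero]

theorem norm_eval_lagrangeBasis_eq_norm_eval_compl (hn : 0 < n) {A : Finset ℂ}
    (hA : A ⊆ nthRootsFinset n (1 : ℂ)) {a b : ℂ} (ha : a ∈ A)
    (hb : b ∈ nthRootsFinset n (1 : ℂ) \ A) :
    ‖(Lagrange.basis A id a).eval b‖ =
      ‖(Lagrange.basis (nthRootsFinset n (1 : ℂ) \ A) id b).eval a‖ := by
  have norm_derivative (z : ℂ) (hz : z ∈ nthRootsFinset n (1 : ℂ)) :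
      ‖(derivative (X ^ n - 1 : ℂ[X])).eval z‖ = n := by
    simp [derivative_X_pow,
      Complex.norm_eq_one_of_pow_eq_one ((mem_nthRootsFinset hn 1).1 hz) hn.ne']
  have norms_eq := congrArg norm <| eval_lagrangeBasis_mul_derivative_nodal_antisymm (v := id)
    (Set.injOn_id _) (Set.injOn_id _) disjoint_sdiff ha hb
  rw [union_sdiff_of_subset hA,
    nodal_nthRootsFinset_one (Complex.isPrimitiveRoot_exp n hn.ne') hn, norm_neg, norm_mul,
    norm_mul, id, id, norm_derivative a (hA ha), norm_derivative b (mem_sdiff.1 hb).1] at norms_eq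
  exact mul_right_cancel₀ (Nat.cast_ne_zero.2 hn.ne') norms_eq

theorem sum_pow_mul_conj_pow_nthRootsFinset_one {k l : ℕ} (hk : k < n) (hl : l < n) :
    ∑ ζ ∈ nthRootsFinset n (1 : ℂ), ζ ^ k * (starRingEnd ℂ) (ζ ^ l) =
      if k = l then (n : ℂ) else 0 := by
  have hn : 0 < n := by omega
  have mul_conj_eq (ζ : ℂ) (hζ : ζ ∈ nthRootsFinset n (1 : ℂ)) :
      ζ ^ k * (starRingEnd ℂ) (ζ ^ l) = ζ ^ (k - l : ℤ) := by
    have norm_ζ := Complex.norm_eq_one_of_pow_eq_one ((mem_nthRootsFinset hn 1).1 hζ) hn.ne'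
    rw [map_pow, ← Complex.inv_eq_conj norm_ζ, inv_pow, ← div_eq_mul_inv,
      zpow_sub₀ (norm_ne_zero_iff.1 (norm_ζ ▸ one_ne_zero)), zpow_natCast, zpow_natCast]
  have dvd_iff : (n : ℤ) ∣ k - l ↔ k = l := by
    refine ⟨fun h ↦ ?_, fun h ↦ by simp [h]⟩
    have := Int.eq_zero_of_abs_lt_dvd h (abs_sub_lt_iff.2 ⟨by omega, by omega⟩)
    omega
  rw [sum_congr rfl mul_conj_eq,
    sum_zpow_nthRootsFinset_one (Complex.isPrimitiveRoot_exp n hn.ne') hn, if_congr dvd_iff rfl rfl]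

theorem sum_sq_norm_eval_nthRootsFinset_one {P : ℂ[X]} {m : ℕ} (hP : P.natDegree < m)
    (hmn : m ≤ n) :
    ∑ ζ ∈ nthRootsFinset n (1 : ℂ), ‖P.eval ζ‖ ^ 2 = n * ∑ k ∈ range m, ‖P.coeff k‖ ^ 2 := by
  have lt_of_mem_range {k : ℕ} (hk : k ∈ range m) : k < n := (mem_range.1 hk).trans_le hmn
  have sq_norm_eval (ζ : ℂ) : (‖P.eval ζ‖ : ℂ) ^ 2 = ∑ k ∈ range m, ∑ l ∈ range m,
      P.coeff k * (starRingEnd ℂ) (P.coeff l) * (ζ ^ k * (starRingEnd ℂ) (ζ ^ l)) := by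
    rw [← Complex.mul_conj', eval_eq_sum_range' hP, map_sum, sum_mul_sum]
    simp only [map_mul, mul_mul_mul_comm]
  apply Complex.ofReal_injective
  push_cast
  simp only [sq_norm_eval]
  rw [sum_comm, mul_sum]
  refine sum_congr rfl fun k hk ↦ ?_
  rw [sum_comm, sum_eq_single_of_mem k hk]
  · rw [← mul_sum, sum_pow_mul_conj_pow_nthRootsFinset_one (lt_of_mem_range hk)
      (lt_of_mem_range hk), if_pos rfl, Complex.mul_conj', mul_comm]
  · intro l hl hlk
    rw [← mul_sum, sum_pow_mul_conj_pow_nthRootsFinset_one (lt_of_mem_range hk)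
      (lt_of_mem_range hl), if_neg hlk.symm, mul_zero]

theorem sum_sq_norm_eval_lagrangeBasis_le (hn : 0 < n) {A : Finset ℂ}
    (hA : A ⊆ nthRootsFinset n (1 : ℂ)) {a : ℂ} (ha : a ∈ A) :
    ∑ ζ ∈ nthRootsFinset n (1 : ℂ), ‖(Lagrange.basis A id a).eval ζ‖ ^ 2 ≤
      1 + (n - #A : ℕ) * ((n : ℝ) ^ (n - #A - 1) / (n - #A - 1).factorial) ^ 2 := by
  have card_compl : #(nthRootsFinset n (1 : ℂ) \ A) = n - #A := by
    rw [card_sdiff_of_subset hA, (Complex.isPrimitiveRoot_exp n hn.ne').card_nthRootsFinset]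
  have norm_a : ‖a‖ = 1 :=
    Complex.norm_eq_one_of_pow_eq_one ((mem_nthRootsFinset hn 1).1 (hA ha)) hn.ne'
  have sum_nodes : ∑ ζ ∈ A, ‖(Lagrange.basis A id a).eval ζ‖ ^ 2 = 1 := by
    rw [sum_eq_single_of_mem a ha]
    · rw [show eval a (Lagrange.basis A id a) = 1 from
        Lagrange.eval_basis_self (Set.injOn_id _) ha, norm_one, one_pow]
    · intro ζ hζ hζa
      rw [show eval ζ (Lagrange.basis A id a) = 0 from
        Lagrange.eval_basis_of_ne (v := id) hζa.symm hζ, norm_zero, zero_pow two_ne_zero]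
  rw [← sum_sdiff hA, add_comm, sum_nodes, ← card_compl, ← nsmul_eq_mul]
  gcongr
  refine sum_le_card_nsmul _ _ _ fun b hb ↦ ?_
  rw [norm_eval_lagrangeBasis_eq_norm_eval_compl hn hA ha hb]
  gcongr
  exact norm_eval_lagrangeBasis_le_of_norm_le_one hn sdiff_subset norm_a.le hb

theorem sum_sq_norm_coeff_lagrangeBasis_le (hn : 0 < n) {A : Finset ℂ}
    (hA : A ⊆ nthRootsFinset n (1 : ℂ)) {a : ℂ} (ha : a ∈ A) :
    ∑ k ∈ range #A, ‖(Lagrange.basis A id a).coeff k‖ ^ 2 ≤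
      ((n : ℝ) ^ (n - #A) / (n - #A).factorial) ^ 2 := by
  have hApos : 0 < #A := card_pos.2 ⟨a, ha⟩
  have hAn : #A ≤ n :=
    (card_le_card hA).trans_eq (Complex.isPrimitiveRoot_exp n hn.ne').card_nthRootsFinset
  have natDegree_lt : (Lagrange.basis A id a).natDegree < #A := by
    rw [Lagrange.natDegree_basis (Set.injOn_id _) ha]
    omega
  refine le_of_mul_le_mul_left ?_ (Nat.cast_pos.2 hn : (0 : ℝ) < n)
  rw [← sum_sq_norm_eval_nthRootsFinset_one natDegree_lt hAn]
  exact (sum_sq_norm_eval_lagrangeBasis_le hn hA ha).trans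
    (one_add_mul_sq_le_mul_sq_pow_div_factorial (by omega))

end ComplexRootsOfUnity

theorem vandermonde_inverse_opNorm_le_general {m n : ℕ} (hn : 0 < n) {α : Fin m → ℂ}
    (hroot : ∀ i, α i ^ n = 1) (hinj : Function.Injective α) :
    ‖(Matrix.vandermonde α)⁻¹‖ ≤ √m * ((n : ℝ) ^ (n - m) / (n - m).factorial) := by
  have card_nodes : #(univ.image α) = m := by rw [card_image_of_injective _ hinj, card_fin]
  have nodes_subset : univ.image α ⊆ nthRootsFinset n (1 : ℂ) :=
    image_subset_iff.2 fun i _ ↦ (mem_nthRootsFinset hn 1).2 (hroot i)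
  have column_le (i : Fin m) : ∑ j : Fin m, ‖(Lagrange.basis univ α i).coeff j‖ ^ 2 ≤
      ((n : ℝ) ^ (n - m) / (n - m).factorial) ^ 2 := by
    have := sum_sq_norm_coeff_lagrangeBasis_le hn nodes_subset (mem_image_of_mem α (mem_univ i))
    rwa [card_nodes, lagrangeBasis_image_id hinj, ← Fin.sum_univ_eq_sum_range
      (fun j ↦ ‖(Lagrange.basis univ α i).coeff j‖ ^ 2)] at this
  refine le_of_sq_le_sq ?_ (by positivity)
  calc ‖(Matrix.vandermonde α)⁻¹‖ ^ 2
      ≤ ∑ j : Fin m, ∑ i : Fin m, ‖(Lagrange.basis univ α i).coeff j‖ ^ 2 := by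
        rw [inv_vandermonde_eq_of_coeff_basis hinj]
        exact sq_l2_opNorm_le_sum_sq_norm _
    _ ≤ ∑ _i : Fin m, ((n : ℝ) ^ (n - m) / (n - m).factorial) ^ 2 := by
        rw [sum_comm]
        exact sum_le_sum fun i _ ↦ column_le i
    _ = (√m * ((n : ℝ) ^ (n - m) / (n - m).factorial)) ^ 2 := by
        rw [sum_const, card_fin, nsmul_eq_mul, mul_pow, Real.sq_sqrt m.cast_nonneg]

theorem sqrt_mul_pow_le_rpow_add_three_halves {m n : ℕ} (hn : 0 < n) (hmn : m ≤ n) (d : ℕ) :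
    √m * (n : ℝ) ^ d ≤ (n : ℝ) ^ (d + 3 / 2 : ℝ) := by
  have one_le : (1 : ℝ) ≤ n := Nat.one_le_cast.2 hn
  calc √m * (n : ℝ) ^ d ≤ (n : ℝ) ^ (1 / 2 : ℝ) * (n : ℝ) ^ (d : ℝ) := by
        rw [Real.rpow_natCast, ← Real.sqrt_eq_rpow]
        gcongr
    _ = (n : ℝ) ^ (1 / 2 + d : ℝ) := (Real.rpow_add (by positivity) _ _).symm
    _ ≤ (n : ℝ) ^ (d + 3 / 2 : ℝ) := Real.rpow_le_rpow_of_exponent_le one_le (by linarith)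

/-- Let `m ≤ n` be positive integers and let `W` be the `m × m` Vandermonde matrix whose
evaluation points are distinct `n`-th roots of unity. Then, with `d = n − m`,
`‖W⁻¹‖₂ ≤ n^{d + 3/2} / d!`. -/
theorem vandermonde_inverse_opNorm_le (m n : ℕ) (hm : 0 < m) (hmn : m ≤ n)
    (α : Fin m → ℂ) (hroot : ∀ i, α i ^ n = 1) (hinj : Function.Injective α) :
    ‖(Matrix.vandermonde α)⁻¹‖ ≤
      (n : ℝ) ^ ((n - m : ℕ) + 3 / 2 : ℝ) / (Nat.factorial (n - m)) := by
  have hn : 0 < n := hm.trans_le hmn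
  refine (vandermonde_inverse_opNorm_le_general hn hroot hinj).trans ?_
  rw [← mul_div_assoc]
  gcongr
  exact sqrt_mul_pow_le_rpow_add_three_halves hn hmn (n - m)
end

section
/- Let m ≤ n be positive integers and let W be the m × m Vandermonde matrix whose evaluation points are distinct n-th roots of unity. Then, with d = n − m, the spectral condition number satisfies κ₂(W) = ‖W‖₂ · ‖W⁻¹‖₂ ≤ n^{d + 2} / d!. -/
open scoped Matrix.Norms.L2Operator

/-!
The inverse of the Vandermonde matrix `W` holds the coefficients of the Lagrange basis polynomials
`ℓ` of the nodes, and by Fourier inversion a coefficient of a polynomial of degree less than `n` is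
at most the maximum of its modulus on the `n`-th roots of unity. If `Q` is a set of such roots and
`z ∉ Q` is another one, the distances from `z` to the points of `Q` and to the other roots outside
`Q` multiply to `n`. Hence the value at `z` of the `ℓ` that is `1` at `x` and vanishes on `Q` has as
modulus a quotient of two products of `d = n - m` distances, from `x` and from `z` to the other
roots outside `Q`. The numerator is at most `2 ^ d`. A chord between two roots `k` steps apart has
length at least `4 |k| / n`, so the denominator is at least `(2 / n) ^ d * d!`. The entries of `W⁻¹`
are thus at most `n ^ d / d!` in modulus, while those of `W` have modulus `1`.
-/

namespace VandermondeRoots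

open Finset Polynomial

section OperatorNorm

variable {ι κ 𝕜 : Type*} [Fintype ι] [Fintype κ] [RCLike 𝕜]

theorem l2_opNorm_le_sqrt_sum_sq [DecidableEq κ] (A : Matrix ι κ 𝕜) :
    ‖A‖ ≤ √(∑ i, ∑ j, ‖A i j‖ ^ 2) := by
  rw [Matrix.l2_opNorm_def]
  refine ContinuousLinearMap.opNorm_le_bound _ (Real.sqrt_nonneg _) fun x ↦ ?_
  have row_le (i : ι) : ‖A.mulVec x.ofLp i‖ ^ 2 ≤ (∑ j, ‖A i j‖ ^ 2) * ‖x‖ ^ 2 := by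
    calc ‖A.mulVec x.ofLp i‖ ^ 2 ≤ (∑ j, ‖A i j‖ * ‖x j‖) ^ 2 := by
          gcongr
          exact (norm_sum_le _ _).trans_eq (sum_congr rfl fun j _ ↦ norm_mul _ _)
      _ ≤ (∑ j, ‖A i j‖ ^ 2) * ∑ j, ‖x j‖ ^ 2 := sum_mul_sq_le_sq_mul_sq _ _ _
      _ = (∑ j, ‖A i j‖ ^ 2) * ‖x‖ ^ 2 := by rw [EuclideanSpace.norm_sq_eq]
  refine (sq_le_sq₀ (norm_nonneg _) (by positivity)).mp ?_
  rw [mul_pow, Real.sq_sqrt (by positivity), sum_mul, EuclideanSpace.norm_sq_eq]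
  exact sum_le_sum fun i _ ↦ row_le i

theorem l2_opNorm_le_card_mul [DecidableEq ι] {A : Matrix ι ι 𝕜} {c : ℝ} (hc : 0 ≤ c)
    (hA : ∀ i j, ‖A i j‖ ≤ c) : ‖A‖ ≤ Fintype.card ι * c := by
  refine (l2_opNorm_le_sqrt_sum_sq A).trans (Real.sqrt_le_iff.mpr ⟨by positivity, ?_⟩)
  calc ∑ i, ∑ j, ‖A i j‖ ^ 2 ≤ ∑ _i : ι, ∑ _j : ι, c ^ 2 := by gcongr; exact hA _ _
    _ = (Fintype.card ι * c) ^ 2 := by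
      simp only [sum_const, card_univ, nsmul_eq_mul]
      ring

end OperatorNorm

theorem prod_norm_sub_le_two_pow {E : Type*} [SeminormedAddCommGroup E] {x : E} {T : Finset E}
    (hx : ‖x‖ ≤ 1) (hT : ∀ t ∈ T, ‖t‖ ≤ 1) : ∏ t ∈ T, ‖x - t‖ ≤ 2 ^ #T := by
  rw [← prod_const]
  refine prod_le_prod (fun t _ ↦ norm_nonneg _) fun t ht ↦ ?_
  linarith [norm_sub_le x t, hT t ht]

theorem eval_basis_eq_div {ι K : Type*} [DecidableEq ι] [Field K] (s : Finset ι) (v : ι → K)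
    (i : ι) (x : K) :
    (Lagrange.basis s v i).eval x =
      (∏ j ∈ s.erase i, (x - v j)) / ∏ j ∈ s.erase i, (v i - v j) := by
  rw [← prod_div_distrib, Lagrange.basis, eval_prod]
  simp only [Lagrange.basisDivisor, eval_mul, eval_C, eval_sub, eval_X, div_eq_inv_mul]

theorem natDegree_basis_lt_card {ι K : Type*} [DecidableEq ι] [Field K] {s : Finset ι} {v : ι → K}
    {i : ι} (hv : Set.InjOn v s) (hi : i ∈ s) : (Lagrange.basis s v i).natDegree < #s := by
  rw [Lagrange.natDegree_basis hv hi]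
  exact Nat.sub_one_lt (card_ne_zero_of_mem hi)

theorem inv_vandermonde_eq_coeff_basis {K : Type*} [Field K] {m : ℕ} {v : Fin m → K}
    (hv : Function.Injective v) :
    (Matrix.vandermonde v)⁻¹ = Matrix.of fun i j : Fin m ↦ (Lagrange.basis univ v j).coeff i := by
  refine Matrix.inv_eq_right_inv (Matrix.ext fun i j ↦ ?_)
  have hdeg : (Lagrange.basis univ v j).natDegree < m := by
    simpa only [card_univ, Fintype.card_fin] using natDegree_basis_lt_card hv.injOn (mem_univ j)
  calc (Matrix.vandermonde v * Matrix.of fun i j : Fin m ↦ (Lagrange.basis univ v j).coeff i) i j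
      = (Lagrange.basis univ v j).eval (v i) := by
        simp only [Matrix.mul_apply, Matrix.vandermonde_apply, Matrix.of_apply,
          eval_eq_sum_range' hdeg, sum_range, mul_comm]
    _ = (1 : Matrix (Fin m) (Fin m) K) i j := by
        obtain rfl | hij := eq_or_ne i j
        · rw [Lagrange.eval_basis_self hv.injOn (mem_univ _), Matrix.one_apply_eq]
        · rw [Lagrange.eval_basis_of_ne hij.symm (mem_univ _), Matrix.one_apply_ne hij]

theorem factorial_card_le_prod_two_mul_natAbs {T : Finset ℤ} (hT : 0 ∉ T) :
    (#T).factorial ≤ ∏ k ∈ T, 2 * k.natAbs := by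
  induction T using Finset.induction_on_max_value Int.natAbs with
  | empty => simp
  | insert a s ha hmax ih =>
    have hsub : insert a s ⊆ (Icc (-(a.natAbs : ℤ)) a.natAbs).erase 0 := by
      intro k hk
      have hk0 : k ≠ 0 := ne_of_mem_of_not_mem hk hT
      have hka : k.natAbs ≤ a.natAbs := by
        obtain rfl | hks := mem_insert.mp hk
        exacts [le_rfl, hmax k hks]
      rw [mem_erase, mem_Icc]
      omega
    have hcard : #s + 1 ≤ 2 * a.natAbs := by
      have := card_le_card hsub
      rw [card_insert_of_notMem ha, card_erase_of_mem (by simp), Int.card_Icc] at this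
      omega
    rw [card_insert_of_notMem ha, prod_insert ha, Nat.factorial_succ]
    exact Nat.mul_le_mul hcard (ih fun h ↦ hT (mem_insert_of_mem h))

section FourierInversion

variable {K : Type*} [Field K] {n : ℕ} {ζ : K}

theorem sum_zpow_nthRootsFinset_eq_zero (hζ : IsPrimitiveRoot ζ n) {k : ℤ} (hk : ¬(n : ℤ) ∣ k) :
    ∑ z ∈ nthRootsFinset n (1 : K), z ^ k = 0 := by
  obtain rfl | hn := n.eq_zero_or_pos
  · simp
  have hζ0 : ζ ≠ 0 := hζ.ne_zero hn.ne'
  have hζk : ζ ^ k ≠ 1 := fun h ↦ hk ((hζ.zpow_eq_one_iff_dvd k).mp h)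
  have hinv : ∑ z ∈ nthRootsFinset n (1 : K), ζ ^ k * z ^ k =
      ∑ z ∈ nthRootsFinset n (1 : K), z ^ k :=
    sum_equiv (Equiv.mulLeft₀ ζ hζ0)
      (fun z ↦ by simp [mem_nthRootsFinset hn, mul_pow, hζ.pow_eq_one])
      (fun z _ ↦ by simp [mul_zpow])
  rw [← mul_sum] at hinv
  exact (mul_left_eq_self₀.mp hinv).resolve_left hζk

theorem natCast_mul_coeff_eq_sum (hζ : IsPrimitiveRoot ζ n) {p : K[X]} (hp : p.natDegree < n)
    {i : ℕ} (hi : i < n) :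
    n * p.coeff i = ∑ z ∈ nthRootsFinset n (1 : K), p.eval z * z ^ (-i : ℤ) := by
  have hsum (j : ℕ) (hj : j < n) :
      ∑ z ∈ nthRootsFinset n (1 : K), z ^ (j - i : ℤ) = if j = i then (n : K) else 0 := by
    split_ifs with hji
    · simp [hji, hζ.card_nthRootsFinset]
    · refine sum_zpow_nthRootsFinset_eq_zero hζ fun hdvd ↦ hji ?_
      have := Int.eq_zero_of_abs_lt_dvd hdvd (by rw [abs_lt]; omega)
      omega
  symm
  calc ∑ z ∈ nthRootsFinset n (1 : K), p.eval z * z ^ (-i : ℤ)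
      = ∑ z ∈ nthRootsFinset n (1 : K), ∑ j ∈ range n, p.coeff j * z ^ (j - i : ℤ) := by
        refine sum_congr rfl fun z hz ↦ ?_
        have hz0 : z ≠ 0 := ne_zero_of_mem_nthRootsFinset one_ne_zero hz
        simp only [eval_eq_sum_range' hp, sum_mul, mul_assoc, sub_eq_add_neg, zpow_add₀ hz0,
          zpow_natCast]
    _ = ∑ j ∈ range n, p.coeff j * if j = i then (n : K) else 0 := by
        rw [sum_comm]
        refine sum_congr rfl fun j hj ↦ ?_
        rw [← mul_sum, hsum j (mem_range.mp hj)]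
    _ = n * p.coeff i := by simp [hi, mul_comm]

theorem prod_sub_nthRootsFinset_erase [DecidableEq K] (hζ : IsPrimitiveRoot ζ n) {x : K}
    (hx : x ∈ nthRootsFinset n (1 : K)) :
    ∏ t ∈ (nthRootsFinset n (1 : K)).erase x, (x - t) = n * x ^ (n - 1) := by
  obtain rfl | hn := n.eq_zero_or_pos
  · simp at hx
  have hnodal : Lagrange.nodal (nthRootsFinset n (1 : K)) id = X ^ n - 1 := by
    rw [Lagrange.nodal_eq, X_pow_sub_one_eq_prod hn hζ]
    rfl
  have := Lagrange.eval_nodal_derivative_eval_node_eq (v := id) hx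
  rw [hnodal, Lagrange.eval_nodal] at this
  simpa [derivative_X_pow] using this.symm

end FourierInversion

section ComplexRoots

variable {n : ℕ} {x z : ℂ} {Q T : Finset ℂ}

theorem norm_eq_one_of_mem_nthRootsFinset (hz : z ∈ nthRootsFinset n (1 : ℂ)) : ‖z‖ = 1 := by
  obtain rfl | hn := n.eq_zero_or_pos
  · simp at hz
  exact Complex.norm_eq_one_of_pow_eq_one ((mem_nthRootsFinset hn 1).mp hz) hn.ne'

theorem norm_coeff_le_of_norm_eval_le {p : ℂ[X]} (hp : p.natDegree < n) {c : ℝ}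
    (hc : ∀ z ∈ nthRootsFinset n (1 : ℂ), ‖p.eval z‖ ≤ c) (i : ℕ) : ‖p.coeff i‖ ≤ c := by
  have hn : 0 < n := by omega
  obtain hi | hi := le_or_gt n i
  · rw [coeff_eq_zero_of_natDegree_lt (by omega), norm_zero]
    exact (norm_nonneg _).trans (hc 1 (one_mem_nthRootsFinset hn))
  have hζ := Complex.isPrimitiveRoot_exp n hn.ne'
  refine le_of_mul_le_mul_left (a := (n : ℝ)) ?_ (by positivity)
  calc n * ‖p.coeff i‖ = ‖∑ z ∈ nthRootsFinset n (1 : ℂ), p.eval z * z ^ (-i : ℤ)‖ := by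
        rw [← natCast_mul_coeff_eq_sum hζ hp hi, norm_mul, Complex.norm_natCast]
    _ ≤ ∑ _z ∈ nthRootsFinset n (1 : ℂ), c := norm_sum_le_of_le _ fun z hz ↦ by
        rw [norm_mul, norm_zpow, norm_eq_one_of_mem_nthRootsFinset hz, one_zpow, mul_one]
        exact hc z hz
    _ = n * c := by rw [sum_const, hζ.card_nthRootsFinset, nsmul_eq_mul]

theorem exists_int_arg_eq_of_pow_eq_one (hn : n ≠ 0) (hz : z ^ n = 1) :
    ∃ k : ℤ, z.arg = 2 * Real.pi * k / n := by
  have hangle : ((n * z.arg : ℝ) : Real.Angle) = 0 := by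
    rw [← nsmul_eq_mul, Real.Angle.coe_nsmul, ← Complex.arg_pow_coe_angle, hz, Complex.arg_one,
      Real.Angle.coe_zero]
  obtain ⟨k, hk⟩ := Real.Angle.coe_eq_zero_iff.mp hangle
  refine ⟨k, ?_⟩
  rw [eq_div_iff (by positivity), mul_comm, ← hk, zsmul_eq_mul, mul_comm]

theorem exists_injOn_four_mul_abs_div_le_norm_sub (hx : x ∈ nthRootsFinset n (1 : ℂ)) :
    ∃ k : ℂ → ℤ, Set.InjOn k (nthRootsFinset n (1 : ℂ)) ∧ k x = 0 ∧
      ∀ t ∈ nthRootsFinset n (1 : ℂ), 4 * |(k t : ℝ)| / n ≤ ‖x - t‖ := by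
  obtain rfl | hn := n.eq_zero_or_pos
  · simp at hx
  have hnorm (t) (ht : t ∈ nthRootsFinset n (1 : ℂ)) := norm_eq_one_of_mem_nthRootsFinset ht
  have hne (t) (ht : t ∈ nthRootsFinset n (1 : ℂ)) : t ≠ 0 :=
    ne_zero_of_mem_nthRootsFinset one_ne_zero ht
  have hpow (t) (ht : t ∈ nthRootsFinset n (1 : ℂ)) : (t / x) ^ n = 1 := by
    rw [div_pow, (mem_nthRootsFinset hn 1).mp ht, (mem_nthRootsFinset hn 1).mp hx, div_one]
  choose! k hk using fun t ht ↦ exists_int_arg_eq_of_pow_eq_one hn.ne' (hpow t ht)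
  refine ⟨k, fun t ht u hu htu ↦ ?_, ?_, fun t ht ↦ ?_⟩
  · have harg : (t / x).arg = (u / x).arg := by rw [hk t ht, hk u hu, htu]
    have hnorm_eq : ‖t / x‖ = ‖u / x‖ := by rw [norm_div, norm_div, hnorm t ht, hnorm u hu]
    exact (div_left_inj' (hne x hx)).mp (Complex.ext_norm_arg hnorm_eq harg)
  · simpa [div_self (hne x hx), Real.pi_ne_zero, hn.ne'] using (hk x hx).symm
  · calc 4 * |(k t : ℝ)| / n = 2 / Real.pi * |(t / x).arg| := by
          rw [hk t ht]
          simp only [abs_div, abs_mul, abs_two, abs_of_pos Real.pi_pos, Nat.abs_cast]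
          field_simp
          ring
      _ ≤ ‖t - x‖ := by
          rw [← Complex.angle_eq_abs_arg (hne t ht) (hne x hx)]
          exact Complex.mul_angle_le_norm_sub (hnorm t ht) (hnorm x hx)
      _ = ‖x - t‖ := norm_sub_rev t x

theorem two_div_pow_mul_factorial_le_prod_norm_sub (hx : x ∈ nthRootsFinset n (1 : ℂ))
    (hT : T ⊆ (nthRootsFinset n (1 : ℂ)).erase x) :
    (2 / n : ℝ) ^ #T * (#T).factorial ≤ ∏ t ∈ T, ‖x - t‖ := by
  obtain ⟨k, hinj, hkx, hchord⟩ := exists_injOn_four_mul_abs_div_le_norm_sub hx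
  have hTR : T ⊆ nthRootsFinset n (1 : ℂ) := hT.trans (erase_subset _ _)
  have hinjT : Set.InjOn k T := hinj.mono (coe_subset.mpr hTR)
  have hzero : 0 ∉ T.image k := fun h ↦ by
    obtain ⟨t, ht, hkt⟩ := mem_image.mp h
    exact ne_of_mem_erase (hT ht) (hinj (hTR ht) hx (hkt.trans hkx.symm))
  have hfactorial : ((#T).factorial : ℝ) ≤ ∏ t ∈ T, 2 * |(k t : ℝ)| := by
    have := factorial_card_le_prod_two_mul_natAbs hzero
    rw [card_image_of_injOn hinjT, prod_image hinjT] at this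
    simpa [Nat.cast_natAbs] using (Nat.cast_le (α := ℝ)).mpr this
  calc (2 / n : ℝ) ^ #T * (#T).factorial
      ≤ (2 / n : ℝ) ^ #T * ∏ t ∈ T, 2 * |(k t : ℝ)| := by gcongr
    _ = ∏ t ∈ T, 4 * |(k t : ℝ)| / n := by
      rw [← prod_const, ← prod_mul_distrib]
      exact prod_congr rfl fun t _ ↦ by ring
    _ ≤ ∏ t ∈ T, ‖x - t‖ := prod_le_prod (fun t _ ↦ by positivity) fun t ht ↦ hchord t (hTR ht)

theorem prod_norm_sub_mul_prod_norm_sub (hQ : Q ⊆ nthRootsFinset n (1 : ℂ))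
    (hz : z ∈ nthRootsFinset n (1 : ℂ) \ Q) :
    (∏ t ∈ Q, ‖z - t‖) * ∏ t ∈ (nthRootsFinset n (1 : ℂ) \ Q).erase z, ‖z - t‖ = n := by
  obtain ⟨hzR, hzQ⟩ := mem_sdiff.mp hz
  obtain rfl | hn := n.eq_zero_or_pos
  · simp at hzR
  have hsub : Q ⊆ (nthRootsFinset n (1 : ℂ)).erase z := subset_erase.mpr ⟨hQ, hzQ⟩
  rw [← erase_sdiff_comm, mul_comm, prod_sdiff hsub, ← norm_prod,
    prod_sub_nthRootsFinset_erase (Complex.isPrimitiveRoot_exp n hn.ne') hzR, norm_mul, norm_pow,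
    norm_eq_one_of_mem_nthRootsFinset hzR, one_pow, mul_one, Complex.norm_natCast]

theorem prod_norm_sub_div_prod_norm_sub_eq (hQ : Q ⊆ nthRootsFinset n (1 : ℂ))
    (hx : x ∈ nthRootsFinset n (1 : ℂ) \ Q) (hz : z ∈ nthRootsFinset n (1 : ℂ) \ Q) :
    (∏ t ∈ Q, ‖z - t‖) / ∏ t ∈ Q, ‖x - t‖ =
      (∏ t ∈ (nthRootsFinset n (1 : ℂ) \ Q).erase x, ‖x - t‖) /
        ∏ t ∈ (nthRootsFinset n (1 : ℂ) \ Q).erase z, ‖z - t‖ := by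
  have hxQ : ∏ t ∈ Q, ‖x - t‖ ≠ 0 := prod_ne_zero_iff.mpr fun t ht ↦
    norm_ne_zero_iff.mpr (sub_ne_zero.mpr (ne_of_mem_of_not_mem ht (mem_sdiff.mp hx).2).symm)
  have hzR : ∏ t ∈ (nthRootsFinset n (1 : ℂ) \ Q).erase z, ‖z - t‖ ≠ 0 :=
    prod_ne_zero_iff.mpr fun t ht ↦
      norm_ne_zero_iff.mpr (sub_ne_zero.mpr (ne_of_mem_erase ht).symm)
  rw [div_eq_div_iff hxQ hzR, prod_norm_sub_mul_prod_norm_sub hQ hz, mul_comm,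
    prod_norm_sub_mul_prod_norm_sub hQ hx]

theorem prod_norm_sub_div_prod_norm_sub_le {d : ℕ} (hQ : Q ⊆ nthRootsFinset n (1 : ℂ))
    (hcard : #Q + d + 1 = n) (hx : x ∈ nthRootsFinset n (1 : ℂ) \ Q)
    (hz : z ∈ nthRootsFinset n (1 : ℂ)) :
    (∏ t ∈ Q, ‖z - t‖) / ∏ t ∈ Q, ‖x - t‖ ≤ (n : ℝ) ^ d / d.factorial := by
  by_cases hzQ : z ∈ Q
  · rw [prod_eq_zero hzQ (by rw [sub_self, norm_zero]), zero_div]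
    positivity
  have hn : 0 < n := by omega
  set R := nthRootsFinset n (1 : ℂ)
  have hz' : z ∈ R \ Q := mem_sdiff.mpr ⟨hz, hzQ⟩
  have hnorm (y) (hy : y ∈ R) : ‖y‖ ≤ 1 := (norm_eq_one_of_mem_nthRootsFinset hy).le
  have hcardR : #R = n := (Complex.isPrimitiveRoot_exp n hn.ne').card_nthRootsFinset
  have hcard_erase (y) (hy : y ∈ R \ Q) : #((R \ Q).erase y) = d := by
    rw [card_erase_of_mem hy, card_sdiff_of_subset hQ, hcardR]
    omega
  have hupper : ∏ t ∈ (R \ Q).erase x, ‖x - t‖ ≤ 2 ^ d := by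
    rw [← hcard_erase x hx]
    refine prod_norm_sub_le_two_pow (hnorm x (mem_sdiff.mp hx).1) fun t ht ↦ hnorm t ?_
    exact (mem_sdiff.mp (mem_of_mem_erase ht)).1
  have hlower : (2 / n : ℝ) ^ d * d.factorial ≤ ∏ t ∈ (R \ Q).erase z, ‖z - t‖ := by
    rw [← hcard_erase z hz']
    exact two_div_pow_mul_factorial_le_prod_norm_sub hz (erase_subset_erase z sdiff_subset)
  calc (∏ t ∈ Q, ‖z - t‖) / ∏ t ∈ Q, ‖x - t‖
      = (∏ t ∈ (R \ Q).erase x, ‖x - t‖) / ∏ t ∈ (R \ Q).erase z, ‖z - t‖ :=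
        prod_norm_sub_div_prod_norm_sub_eq hQ hx hz'
    _ ≤ 2 ^ d / ((2 / n : ℝ) ^ d * d.factorial) := by gcongr
    _ = (n : ℝ) ^ d / d.factorial := by
        rw [div_pow]
        field_simp

end ComplexRoots

theorem norm_inv_vandermonde_apply_le {m n : ℕ} (hmn : m ≤ n) {α : Fin m → ℂ}
    (hα : ∀ i, α i ∈ nthRootsFinset n (1 : ℂ)) (hinj : Function.Injective α) (i j : Fin m) :
    ‖(Matrix.vandermonde α)⁻¹ i j‖ ≤ (n : ℝ) ^ (n - m) / (n - m).factorial := by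
  have hm := i.pos
  rw [inv_vandermonde_eq_coeff_basis hinj, Matrix.of_apply]
  have hdeg : (Lagrange.basis univ α j).natDegree < n :=
    (natDegree_basis_lt_card hinj.injOn (mem_univ j)).trans_le (by simpa using hmn)
  refine norm_coeff_le_of_norm_eval_le hdeg (fun z hz ↦ ?_) i
  have hQ : (univ.erase j).image α ⊆ nthRootsFinset n (1 : ℂ) :=
    image_subset_iff.mpr fun i _ ↦ hα i
  have hcard : #((univ.erase j).image α) + (n - m) + 1 = n := by
    rw [card_image_of_injective _ hinj, card_erase_of_mem (mem_univ _), card_univ,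
      Fintype.card_fin]
    omega
  have hj : α j ∈ nthRootsFinset n (1 : ℂ) \ (univ.erase j).image α := by
    simp [hα j, hinj.eq_iff]
  have := prod_norm_sub_div_prod_norm_sub_le hQ hcard hj hz
  rwa [prod_image hinj.injOn, prod_image hinj.injOn, ← norm_prod, ← norm_prod, ← norm_div,
    ← eval_basis_eq_div] at this

end VandermondeRoots

/-- Let `m ≤ n` be positive integers and let `W` be the `m × m` Vandermonde matrix whose
evaluation points are distinct `n`-th roots of unity. Then, with `d = n − m`, the spectral
condition number satisfies `κ₂(W) = ‖W‖₂ ‖W⁻¹‖₂ ≤ n^{d+2} / d!`. -/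
theorem vandermonde_condition_number_le (m n : ℕ) (hm : 0 < m) (hmn : m ≤ n)
    (α : Fin m → ℂ) (hroot : ∀ i, α i ^ n = 1) (hinj : Function.Injective α) :
    ‖Matrix.vandermonde α‖ * ‖(Matrix.vandermonde α)⁻¹‖ ≤
      (n : ℝ) ^ (n - m + 2) / (Nat.factorial (n - m)) := by
  have hn : 0 < n := hm.trans_le hmn
  have hα (i) : α i ∈ Polynomial.nthRootsFinset n (1 : ℂ) :=
    (Polynomial.mem_nthRootsFinset hn 1).mpr (hroot i)
  have hentry (i j) : ‖Matrix.vandermonde α i j‖ ≤ 1 := by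
    rw [Matrix.vandermonde_apply, norm_pow,
      VandermondeRoots.norm_eq_one_of_mem_nthRootsFinset (hα i), one_pow]
  have hW : ‖Matrix.vandermonde α‖ ≤ m * 1 := by
    simpa only [Fintype.card_fin] using VandermondeRoots.l2_opNorm_le_card_mul zero_le_one hentry
  have hWinv : ‖(Matrix.vandermonde α)⁻¹‖ ≤ m * ((n : ℝ) ^ (n - m) / (n - m).factorial) := by
    simpa only [Fintype.card_fin] using VandermondeRoots.l2_opNorm_le_card_mul (by positivity)
      (VandermondeRoots.norm_inv_vandermonde_apply_le hmn hα hinj)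
  calc ‖Matrix.vandermonde α‖ * ‖(Matrix.vandermonde α)⁻¹‖
      ≤ (m * 1) * (m * ((n : ℝ) ^ (n - m) / (n - m).factorial)) := by gcongr
    _ ≤ (n * 1) * (n * ((n : ℝ) ^ (n - m) / (n - m).factorial)) := by gcongr
    _ = (n : ℝ) ^ (n - m + 2) / (n - m).factorial := by ring
end

section
/- Let A₁, A₂ ∈ ℝ^{t×s} and B₁, B₂ ∈ ℝ^{s×r}, and consider the real matrices A = (A₁; A₂) ∈ ℝ^{2t×s} (vertical concatenation) and B = (B₁ B₂) ∈ ℝ^{s×2r} (horizontal concatenation). Define A' = A₁ + i·A₂ ∈ ℂ^{t×s} and B' = B₁ + i·B₂ ∈ ℂ^{s×r}. Then the product AB equals the 2×2 block matrix (1/2) · [[Re(A'B') + Re(A'·conj(B')), Im(A'B') − Im(A'·conj(B'))], [Im(A'B') + Im(A'·conj(B')), −Re(A'B') + Re(A'·conj(B'))]], where conj denotes entrywise complex conjugation and Re, Im are applied entrywise. -/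
open Matrix

/-! Expanding, `A' B' = (A₁ B₁ - A₂ B₂) + i (A₁ B₂ + A₂ B₁)` and
`A' conj(B') = (A₁ B₁ + A₂ B₂) + i (A₂ B₁ - A₁ B₂)`. Half the sum and half the difference of the
real parts, and likewise of the imaginary parts, isolate the four blocks of `A B`. -/

section RealImaginaryParts

variable {m n k : Type*}

lemma map_re_ofReal_add_I_smul (X Y : Matrix m n ℝ) :
    (X.map Complex.ofReal + Complex.I • Y.map Complex.ofReal).map Complex.re = X := by
  ext
  simp

lemma map_im_ofReal_add_I_smul (X Y : Matrix m n ℝ) :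
    (X.map Complex.ofReal + Complex.I • Y.map Complex.ofReal).map Complex.im = Y := by
  ext
  simp

lemma map_re_map_conj (M : Matrix m n ℂ) :
    (M.map (starRingEnd ℂ)).map Complex.re = M.map Complex.re := by
  ext
  simp

lemma map_im_map_conj (M : Matrix m n ℂ) :
    (M.map (starRingEnd ℂ)).map Complex.im = -M.map Complex.im := by
  ext
  simp

variable [Fintype n] (M : Matrix m n ℂ) (N : Matrix n k ℂ)

lemma map_re_mul :
    (M * N).map Complex.re =
      M.map Complex.re * N.map Complex.re - M.map Complex.im * N.map Complex.im := by
  ext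
  simp [mul_apply]

lemma map_im_mul :
    (M * N).map Complex.im =
      M.map Complex.re * N.map Complex.im + M.map Complex.im * N.map Complex.re := by
  ext
  simp [mul_apply, Finset.sum_add_distrib]

lemma map_re_mul_map_conj :
    (M * N.map (starRingEnd ℂ)).map Complex.re =
      M.map Complex.re * N.map Complex.re + M.map Complex.im * N.map Complex.im := by
  rw [map_re_mul, map_re_map_conj, map_im_map_conj, Matrix.mul_neg, sub_neg_eq_add]

lemma map_im_mul_map_conj :
    (M * N.map (starRingEnd ℂ)).map Complex.im =
      M.map Complex.im * N.map Complex.re - M.map Complex.re * N.map Complex.im := by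
  rw [map_im_mul, map_re_map_conj, map_im_map_conj, Matrix.mul_neg, neg_add_eq_sub]

end RealImaginaryParts

theorem outer_complexification_general {m n k : Type*} [Fintype n]
    (A₁ A₂ : Matrix m n ℝ) (B₁ B₂ : Matrix n k ℝ) (A' : Matrix m n ℂ) (B' : Matrix n k ℂ)
    (hA' : A' = A₁.map Complex.ofReal + Complex.I • A₂.map Complex.ofReal)
    (hB' : B' = B₁.map Complex.ofReal + Complex.I • B₂.map Complex.ofReal) :
    fromRows A₁ A₂ * fromCols B₁ B₂ =
      (1 / 2 : ℝ) • fromBlocks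
        ((A' * B').map Complex.re + (A' * B'.map (starRingEnd ℂ)).map Complex.re)
        ((A' * B').map Complex.im - (A' * B'.map (starRingEnd ℂ)).map Complex.im)
        ((A' * B').map Complex.im + (A' * B'.map (starRingEnd ℂ)).map Complex.im)
        (-(A' * B').map Complex.re + (A' * B'.map (starRingEnd ℂ)).map Complex.re) := by
  have re_A' : A'.map Complex.re = A₁ := hA' ▸ map_re_ofReal_add_I_smul A₁ A₂
  have im_A' : A'.map Complex.im = A₂ := hA' ▸ map_im_ofReal_add_I_smul A₁ A₂
  have re_B' : B'.map Complex.re = B₁ := hB' ▸ map_re_ofReal_add_I_smul B₁ B₂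
  have im_B' : B'.map Complex.im = B₂ := hB' ▸ map_im_ofReal_add_I_smul B₁ B₂
  rw [fromRows_mul_fromCols, fromBlocks_smul, map_re_mul, map_im_mul, map_re_mul_map_conj,
    map_im_mul_map_conj, re_A', im_A', re_B', im_B']
  congr 1 <;> module

/-- Outer complexification: for real matrices `A = (A₁; A₂)` and `B = (B₁ B₂)`, with
`A' = A₁ + i A₂` and `B' = B₁ + i B₂`, the product `A B` equals the `2 × 2` block matrix
`(1/2) [[Re(A'B') + Re(A' conj(B')), Im(A'B') − Im(A' conj(B'))],
        [Im(A'B') + Im(A' conj(B')), −Re(A'B') + Re(A' conj(B'))]]`. -/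
theorem outer_complexification (t s r : ℕ)
    (A₁ A₂ : Matrix (Fin t) (Fin s) ℝ) (B₁ B₂ : Matrix (Fin s) (Fin r) ℝ)
    (A' : Matrix (Fin t) (Fin s) ℂ) (B' : Matrix (Fin s) (Fin r) ℂ)
    (hA' : A' = A₁.map (Complex.ofReal) + Complex.I • A₂.map (Complex.ofReal))
    (hB' : B' = B₁.map (Complex.ofReal) + Complex.I • B₂.map (Complex.ofReal)) :
    fromRows A₁ A₂ * fromCols B₁ B₂ =
      (1 / 2 : ℝ) • fromBlocks
        ((A' * B').map Complex.re + (A' * B'.map (starRingEnd ℂ)).map Complex.re)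
        ((A' * B').map Complex.im - (A' * B'.map (starRingEnd ℂ)).map Complex.im)
        ((A' * B').map Complex.im + (A' * B'.map (starRingEnd ℂ)).map Complex.im)
        (-(A' * B').map Complex.re + (A' * B'.map (starRingEnd ℂ)).map Complex.re) :=
  outer_complexification_general A₁ A₂ B₁ B₂ A' B' hA' hB'
end

section
/- Let M ≥ 1 and X ≥ 1 be integers, let N = M + 2X, and let α_i = ω_N^i for i ∈ {1, …, N}. Let A_j ∈ ℂ^{t×p} and B_j ∈ ℂ^{p×r} for j ∈ {1, …, M}, and let R_j ∈ ℂ^{t×p} and S_j ∈ ℂ^{p×r} for j ∈ {1, …, X} be arbitrary matrices. Define the matrix-valued Laurent polynomial functions f(z) = Σ_{j=1}^{M} A_j z^{j−1} + Σ_{j=1}^{X} R_j z^{M+j−1} and g(z) = Σ_{j=1}^{M} B_j z^{−(j−1)} + Σ_{j=1}^{X} S_j z^{j} for z ∈ ℂ \ {0}. Then (1/N) Σ_{i=1}^{N} f(α_i) g(α_i) = Σ_{j=1}^{M} A_j B_j. -/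
/-!
The product `f z * g z` is a Laurent polynomial whose exponents lie strictly between `-N` and `N`.
Averaging over the `N`-th roots of unity annihilates every monomial whose exponent is not a multiple
of `N`, so only the constant term survives, and the exponents are chosen so that a term of `f` and a
term of `g` have opposite exponents exactly when they carry `A j` and `B j` with the same `j`.
-/

section LaurentPolynomial

variable {K E F G ι κ : Type*} [Field K] [AddCommMonoid E] [Module K E] [AddCommMonoid F]
  [Module K F] [AddCommMonoid G] [Module K G] [Fintype ι] [Fintype κ]

/-- The value at `z` of the Laurent polynomial `∑ a, c a * z ^ e a` with coefficients in a vector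
space, used to treat all terms of an encoding polynomial alike. It is presented by a family of
monomials, whose exponents may repeat, because the terms of a product are indexed by pairs. -/
def laurentEval (e : ι → ℤ) (c : ι → E) (z : K) : E :=
  ∑ a, z ^ e a • c a

theorem map_laurentEval₂ (β : E →ₗ[K] F →ₗ[K] G) (d : ι → ℤ) (e : κ → ℤ) (b : ι → E) (c : κ → F)
    {z : K} (hz : z ≠ 0) :
    β (laurentEval d b z) (laurentEval e c z) =
      laurentEval (fun a : ι × κ ↦ d a.1 + e a.2) (fun a ↦ β (b a.1) (c a.2)) z := by
  rw [laurentEval, laurentEval, laurentEval, LinearMap.map_sum₂, Fintype.sum_prod_type]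
  simp only [map_sum, map_smul, LinearMap.smul_apply, smul_comm (z ^ e _), zpow_add₀ hz, mul_smul]

theorem sum_zpow_primitiveRoot_pow {N : ℕ} {ζ : K} (hζ : IsPrimitiveRoot ζ N) (l : ℤ) :
    ∑ i : Fin N, (ζ ^ ((i : ℕ) + 1)) ^ l = if (N : ℤ) ∣ l then (N : K) else 0 := by
  have hterm (i : ℕ) : (ζ ^ (i + 1)) ^ l = ζ ^ l * (ζ ^ l) ^ i := by
    rw [← pow_succ', ← zpow_natCast, ← zpow_natCast, zpow_comm]
  have hpow : (ζ ^ l) ^ N = 1 := by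
    rw [← zpow_natCast, zpow_comm, zpow_natCast, hζ.pow_eq_one, one_zpow]
  simp only [hterm, ← Finset.mul_sum, Fin.sum_univ_eq_sum_range (fun i ↦ (ζ ^ l) ^ i)]
  split_ifs with hl
  · simp [(hζ.zpow_eq_one_iff_dvd l).2 hl]
  · rw [geom_sum_eq (mt (hζ.zpow_eq_one_iff_dvd l).1 hl), hpow, sub_self, zero_div, mul_zero]

theorem average_laurentEval_primitiveRoot_pow {N : ℕ} [NeZero N] {ζ : K} (hζ : IsPrimitiveRoot ζ N)
    (e : ι → ℤ) (c : ι → E) (he : ∀ a, |e a| < N) :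
    (1 / (N : K)) • ∑ i : Fin N, laurentEval e c (ζ ^ ((i : ℕ) + 1)) = ∑ a with e a = 0, c a := by
  have hN : (N : K) ≠ 0 := hζ.neZero'.out
  have hdvd (a : ι) : (N : ℤ) ∣ e a ↔ e a = 0 :=
    ⟨fun h ↦ Int.eq_zero_of_abs_lt_dvd h (he a), fun h ↦ h ▸ dvd_zero _⟩
  calc (1 / (N : K)) • ∑ i : Fin N, laurentEval e c (ζ ^ ((i : ℕ) + 1))
      = (1 / (N : K)) • ∑ a, (∑ i : Fin N, (ζ ^ ((i : ℕ) + 1)) ^ e a) • c a := by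
        simp only [laurentEval, Finset.sum_smul]
        rw [Finset.sum_comm]
    _ = (1 / (N : K)) • ∑ a, (if e a = 0 then (N : K) else 0) • c a := by
        simp only [sum_zpow_primitiveRoot_pow hζ, hdvd]
    _ = ∑ a with e a = 0, c a := by
        simp only [ite_smul, zero_smul, ← Finset.sum_filter, ← Finset.smul_sum, smul_smul,
          one_div_mul_cancel hN, one_smul]

end LaurentPolynomial

section Exponents

variable {M X : ℕ}

/-- The exponents of the left encoding polynomial `f`: the data block `A j` sits at `z ^ j` and the
random mask `R j` at `z ^ (M + j)`, both counted from `j = 0`. -/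
def leftExponent : Fin M ⊕ Fin X → ℤ :=
  Sum.elim (fun j ↦ (j : ℕ)) (fun j ↦ M + (j : ℕ))

/-- The exponents of the right encoding polynomial `g`: the data block `B j` sits at `z ^ (-j)` and
the random mask `S j` at `z ^ (j + 1)`, both counted from `j = 0`. -/
def rightExponent : Fin M ⊕ Fin X → ℤ :=
  Sum.elim (fun j ↦ -(j : ℕ)) (fun j ↦ (j : ℕ) + 1)

theorem abs_leftExponent_add_rightExponent_lt (a b : Fin M ⊕ Fin X) :
    |leftExponent a + rightExponent b| < M + 2 * X := by
  rw [abs_lt]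
  rcases a with a | a <;> rcases b with b | b <;>
    simp only [leftExponent, rightExponent, Sum.elim_inl, Sum.elim_inr] <;> omega

theorem leftExponent_add_rightExponent_eq_zero_iff (a b : Fin M ⊕ Fin X) :
    leftExponent a + rightExponent b = 0 ↔ ∃ j : Fin M, a = .inl j ∧ b = .inl j := by
  rcases a with a | a <;> rcases b with b | b <;>
    simp only [leftExponent, rightExponent, Sum.elim_inl, Sum.elim_inr, Sum.inl.injEq, reduceCtorEq,
      exists_eq_left', false_and, and_false, exists_false, iff_false] <;> omega

theorem sum_leftExponent_add_rightExponent_eq_zero {E : Type*} [AddCommMonoid E]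
    (h : (Fin M ⊕ Fin X) × (Fin M ⊕ Fin X) → E) :
    ∑ a with leftExponent a.1 + rightExponent a.2 = 0, h a = ∑ j, h (.inl j, .inl j) := by
  have hdiag : Finset.univ.filter (fun a : (Fin M ⊕ Fin X) × (Fin M ⊕ Fin X) ↦
      leftExponent a.1 + rightExponent a.2 = 0) =
        Finset.univ.image fun j : Fin M ↦ (.inl j, .inl j) := by
    ext ⟨a, b⟩
    simp [leftExponent_add_rightExponent_eq_zero_iff, eq_comm]
  rw [hdiag, Finset.sum_image fun i _ j _ hij ↦ Sum.inl_injective (congrArg Prod.fst hij)]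

end Exponents

theorem complex_dft_scheme_decoding_general {K E F G : Type*} [Field K] [AddCommMonoid E]
    [Module K E] [AddCommMonoid F] [Module K F] [AddCommMonoid G] [Module K G]
    (β : E →ₗ[K] F →ₗ[K] G) {M X N : ℕ} [NeZero N] (hN : M + 2 * X ≤ N)
    {ζ : K} (hζ : IsPrimitiveRoot ζ N) (A : Fin M → E) (B : Fin M → F) (R : Fin X → E)
    (S : Fin X → F) (α : Fin N → K) (hα : ∀ i, α i = ζ ^ ((i : ℕ) + 1)) (f : K → E) (g : K → F)
    (hf : ∀ z : K, z ≠ 0 →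
      f z = ∑ j : Fin M, z ^ (j : ℕ) • A j + ∑ j : Fin X, z ^ (M + (j : ℕ)) • R j)
    (hg : ∀ z : K, z ≠ 0 →
      g z = ∑ j : Fin M, z ^ (-((j : ℕ) : ℤ)) • B j + ∑ j : Fin X, z ^ ((j : ℕ) + 1) • S j) :
    ((1 : K) / N) • ∑ i, β (f (α i)) (g (α i)) = ∑ j, β (A j) (B j) := by
  have hf' (z : K) (hz : z ≠ 0) : f z = laurentEval leftExponent (Sum.elim A R) z := by
    simp [hf z hz, laurentEval, leftExponent, Fintype.sum_sum_type, ← zpow_natCast]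
  have hg' (z : K) (hz : z ≠ 0) : g z = laurentEval rightExponent (Sum.elim B S) z := by
    simp [hg z hz, laurentEval, rightExponent, Fintype.sum_sum_type, ← zpow_natCast]
  have hne (i : Fin N) : ζ ^ ((i : ℕ) + 1) ≠ 0 := pow_ne_zero _ (hζ.ne_zero (NeZero.ne N))
  have hlt (a : (Fin M ⊕ Fin X) × (Fin M ⊕ Fin X)) :
      |leftExponent a.1 + rightExponent a.2| < N :=
    (abs_leftExponent_add_rightExponent_lt a.1 a.2).trans_le (mod_cast hN)
  simp only [hα, hf' _ (hne _), hg' _ (hne _), map_laurentEval₂ β _ _ _ _ (hne _)]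
  rw [average_laurentEval_primitiveRoot_pow hζ _ _ hlt, sum_leftExponent_add_rightExponent_eq_zero]
  simp only [Sum.elim_inl]

/-- Decoding correctness of the complex DFT SDMM scheme with inner partitioning parameter `M`
and security parameter `X`: with `N = M + 2X` and `α i = ω_N^i` ranging over all `N`-th roots
of unity, `(1/N) Σ_i f(α i) g(α i) = Σ_j A j * B j`. -/
theorem complex_dft_scheme_decoding (M X : ℕ) (hM : 1 ≤ M) (hX : 1 ≤ X)
    (N : ℕ) (hN : N = M + 2 * X) (t p r : ℕ)
    (A : Fin M → Matrix (Fin t) (Fin p) ℂ) (B : Fin M → Matrix (Fin p) (Fin r) ℂ)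
    (R : Fin X → Matrix (Fin t) (Fin p) ℂ) (S : Fin X → Matrix (Fin p) (Fin r) ℂ)
    (α : Fin N → ℂ)
    (hα : ∀ i : Fin N, α i = Complex.exp (2 * Real.pi * Complex.I / N) ^ ((i : ℕ) + 1))
    (f : ℂ → Matrix (Fin t) (Fin p) ℂ) (g : ℂ → Matrix (Fin p) (Fin r) ℂ)
    (hf : ∀ z : ℂ, z ≠ 0 →
      f z = ∑ j : Fin M, z ^ (j : ℕ) • A j + ∑ j : Fin X, z ^ (M + (j : ℕ)) • R j)
    (hg : ∀ z : ℂ, z ≠ 0 →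
      g z = ∑ j : Fin M, z ^ (-((j : ℕ) : ℤ)) • B j + ∑ j : Fin X, z ^ ((j : ℕ) + 1) • S j) :
    ((1 : ℂ) / N) • ∑ i : Fin N, f (α i) * g (α i) = ∑ j : Fin M, A j * B j := by
  have : NeZero N := ⟨by omega⟩
  exact complex_dft_scheme_decoding_general (mulLinearMap ℂ) hN.ge
    (Complex.isPrimitiveRoot_exp N (NeZero.ne N)) A B R S α hα f g hf hg
end
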